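/- If both A and B are non-classical state spaces (neither Ω_A nor Ω_B is a simplex), then the maximal tensor product A ⊗_max B strictly contains the minimal tensor product A ⊗_min B; i.e., there exists an entangled state: a positive bilinear form on A* × B* normalized by ω(u_A, u_B) = 1 that is not a convex combination of product states. -/

import Mathlib

structure ASS (V : Type*) [AddCommGroup V] [Module ℝ V] where
  pos : Set V
  add_mem : ∀ x ∈ pos, ∀ y ∈ pos, x + y ∈ pos
  smul_mem : ∀ (c : ℝ), 0 ≤ c → ∀ x ∈ pos, c • x ∈ pos
  generating : ∀ v : V, ∃ x ∈ pos, ∃ y ∈ pos, v = x - y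
  u : V →ₗ[ℝ] ℝ
  u_strict : ∀ x ∈ pos, x ≠ 0 → 0 < u x

variable {V W : Type*} [NormedAddCommGroup V] [NormedSpace ℝ V]
  [NormedAddCommGroup W] [NormedSpace ℝ W]

def dualCone (A : ASS V) : Set (Module.Dual ℝ V) := {f | ∀ x ∈ A.pos, 0 ≤ f x}

/-- The normalized states. -/
def stateSpace (A : ASS V) : Set V := {x ∈ A.pos | A.u x = 1}

def IsSimplex (Ω : Set V) : Prop :=
  ∃ s : Finset V, AffineIndependent ℝ (fun x : s => (x : V)) ∧
    Ω = convexHull ℝ (s : Set V)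

noncomputable def prodForm (α : V) (β : W) :
    Module.Dual ℝ V →ₗ[ℝ] Module.Dual ℝ W →ₗ[ℝ] ℝ :=
  LinearMap.mk₂ ℝ (fun a b => a α * b β)
    (fun a a' b => by simp [add_mul])
    (fun c a b => by simp [smul_eq_mul]; ring)
    (fun a b b' => by simp [mul_add])
    (fun c a b => by simp [smul_eq_mul]; ring)

namespace PointedCone

open scoped RealInnerProductSpace

/-- A closed, pointed and generating convex cone in a real inner product space. -/
structure IsProperCone {E : Type} [NormedAddCommGroup E] [InnerProductSpace ℝ E]
    (C : Set E) : Prop where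
  closed : IsClosed C
  zero : (0 : E) ∈ C
  add : ∀ x ∈ C, ∀ y ∈ C, x + y ∈ C
  smul : ∀ c : ℝ, 0 ≤ c → ∀ x ∈ C, c • x ∈ C
  pointed : ∀ x ∈ C, -x ∈ C → x = 0
  gen : ∀ f : E, (∀ x ∈ C, ⟪f, x⟫ = 0) → f = 0

/-- The dual cone, identified with a subset of the space by the inner product. -/
def dualSet {E : Type} [NormedAddCommGroup E] [InnerProductSpace ℝ E] (C : Set E) : Set E :=
  {f | ∀ x ∈ C, 0 ≤ ⟪f, x⟫}

section Basic

variable {E : Type} [NormedAddCommGroup E] [InnerProductSpace ℝ E] {C : Set E}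

theorem mem_dualSet {f : E} : f ∈ dualSet C ↔ ∀ x ∈ C, 0 ≤ ⟪f, x⟫ := Iff.rfl

theorem dualSet_add {f g : E} (hf : f ∈ dualSet C) (hg : g ∈ dualSet C) : f + g ∈ dualSet C :=
  fun x hx => by rw [inner_add_left]; exact add_nonneg (hf x hx) (hg x hx)

theorem dualSet_smul {f : E} {c : ℝ} (hc : 0 ≤ c) (hf : f ∈ dualSet C) : c • f ∈ dualSet C :=
  fun x hx => by rw [real_inner_smul_left]; exact mul_nonneg hc (hf x hx)

theorem dualSet_zero : (0 : E) ∈ dualSet C := fun x _ => by simp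

theorem dualSet_sum {ι : Type*} (s : Finset ι) (f : ι → E) (hf : ∀ i ∈ s, f i ∈ dualSet C) :
    ∑ i ∈ s, f i ∈ dualSet C := fun x hx => by
  rw [sum_inner]; exact Finset.sum_nonneg fun i hi => hf i hi x hx

variable [FiniteDimensional ℝ E]

theorem IsProperCone.bipolar (hC : IsProperCone C) {x : E} (h : ∀ f ∈ dualSet C, 0 ≤ ⟪f, x⟫) :
    x ∈ C := by
  have hcv : Convex ℝ C := fun a ha b hb s t hs ht _ =>
    hC.add _ (hC.smul _ hs _ ha) _ (hC.smul _ ht _ hb)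
  by_contra hx
  obtain ⟨f, r, h1, h2⟩ := geometric_hahn_banach_point_closed hcv hC.closed hx
  have hr : r < 0 := by simpa using h2 0 hC.zero
  obtain ⟨g, hg⟩ := (InnerProductSpace.toDual ℝ E).surjective f
  have hgf : ∀ y, ⟪g, y⟫ = f y := fun y => by rw [← hg]; simp
  have hD : g ∈ dualSet C := by
    intro y hy
    rw [hgf]
    by_contra! hneg
    have := h2 _ (hC.smul (r / f y) (by exact div_nonneg_of_nonpos hr.le hneg.le) y hy)
    rw [map_smul, smul_eq_mul, div_mul_cancel₀ _ hneg.ne] at this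
    exact lt_irrefl _ this
  have := h g hD
  rw [hgf] at this
  linarith

theorem IsProperCone.mem_iff (hC : IsProperCone C) {x : E} :
    x ∈ C ↔ ∀ f ∈ dualSet C, 0 ≤ ⟪f, x⟫ := ⟨fun hx _ hf => hf x hx, hC.bipolar⟩

theorem IsProperCone.dual (hC : IsProperCone C) : IsProperCone (dualSet C) where
  closed := by
    have : dualSet C = ⋂ x ∈ C, {f | 0 ≤ ⟪f, x⟫} := by ext; simp [dualSet]
    rw [this]
    exact isClosed_biInter fun x _ => isClosed_le continuous_const (by fun_prop)
  zero := dualSet_zero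
  add := fun _ hx _ hy => dualSet_add hx hy
  smul := fun _ hc _ hx => dualSet_smul hc hx
  pointed := fun f hf hf' => hC.gen f fun x hx => by
    have h1 := hf x hx
    have h2 := hf' x hx
    rw [inner_neg_left] at h2
    linarith
  gen := fun x hx => hC.pointed x
    (hC.bipolar fun f hf => by rw [real_inner_comm, hx f hf])
    (hC.bipolar fun f hf => by rw [inner_neg_right, real_inner_comm, hx f hf, neg_zero])

theorem IsProperCone.dual_dual (hC : IsProperCone C) : dualSet (dualSet C) = C := by
  ext x
  rw [hC.mem_iff, mem_dualSet]
  simp only [real_inner_comm]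

/-- Strict positivity of a functional on the nonzero part of a cone. -/
def StrictPos (C : Set E) (u : E) : Prop := ∀ x ∈ C, x ≠ 0 → 0 < ⟪u, x⟫

omit [FiniteDimensional ℝ E] in
theorem StrictPos.mem {u : E} (hu : StrictPos C u) : u ∈ dualSet C := fun x hx => by
  by_cases h : x = 0
  · simp [h]
  · exact (hu x hx h).le

theorem IsProperCone.isCompact_sphere (hC : IsProperCone C) :
    IsCompact (C ∩ Metric.sphere (0 : E) 1) :=
  (_root_.isCompact_sphere 0 1).inter_left hC.closed

omit [FiniteDimensional ℝ E] in
theorem nonneg_of_sphere (hC : IsProperCone C) {f : E}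
    (h : ∀ x ∈ C ∩ Metric.sphere (0 : E) 1, 0 ≤ ⟪f, x⟫) : f ∈ dualSet C := by
  intro x hx
  by_cases h0 : x = 0
  · simp [h0]
  have hn : 0 < ‖x‖ := norm_pos_iff.2 h0
  have := h (‖x‖⁻¹ • x) ⟨hC.smul _ (by positivity) _ hx, by
    simp [norm_smul, inv_mul_cancel₀ hn.ne']⟩
  rw [real_inner_smul_right] at this
  exact nonneg_of_mul_nonneg_right this (by positivity)

theorem IsProperCone.exists_strictPos (hC : IsProperCone C) : ∃ u, StrictPos C u := by
  have key : ∃ u ∈ dualSet C, ∀ x ∈ C ∩ Metric.sphere (0 : E) 1, 0 < ⟪u, x⟫ := by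
    refine hC.isCompact_sphere.induction_on (p := fun s => ∃ u ∈ dualSet C, ∀ x ∈ s ∩ C, 0 < ⟪u, x⟫)
      ⟨0, dualSet_zero, by simp⟩ ?_ ?_ ?_ |>.imp fun u hu => ⟨hu.1, fun x hx => hu.2 x ⟨hx, hx.1⟩⟩
    · rintro s t hst ⟨u, hu, h⟩
      exact ⟨u, hu, fun x hx => h x ⟨hst hx.1, hx.2⟩⟩
    · rintro s t ⟨u, hu, h⟩ ⟨v, hv, h'⟩
      refine ⟨u + v, dualSet_add hu hv, fun x hx => ?_⟩
      rw [inner_add_left]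
      rcases hx.1 with hs | ht
      · exact add_pos_of_pos_of_nonneg (h x ⟨hs, hx.2⟩) (hv x hx.2)
      · exact add_pos_of_nonneg_of_pos (hu x hx.2) (h' x ⟨ht, hx.2⟩)
    · intro x hx
      have hx0 : x ≠ 0 := by
        rintro rfl
        simpa using hx.2
      obtain ⟨f, hf, hfx⟩ : ∃ f ∈ dualSet C, 0 < ⟪f, x⟫ := by
        by_contra! hcon
        exact hx0 (hC.pointed x hx.1 (hC.bipolar fun f hf => by
          rw [inner_neg_right]; linarith [hcon f hf]))
      refine ⟨{y | 0 < ⟪f, y⟫}, mem_nhdsWithin_of_mem_nhds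
        ((isOpen_lt continuous_const (by fun_prop)).mem_nhds hfx), f, hf, fun y hy => hy.1⟩
  obtain ⟨u, -, hu⟩ := key
  refine ⟨u, fun x hx h0 => ?_⟩
  have hn : 0 < ‖x‖ := norm_pos_iff.2 h0
  have := hu (‖x‖⁻¹ • x) ⟨hC.smul _ (by positivity) _ hx, by
    simp [norm_smul, inv_mul_cancel₀ hn.ne']⟩
  rw [real_inner_smul_right] at this
  exact pos_of_mul_pos_right this (by positivity)

/-- If `w` is nonnegative on the face of `C` cut out by `h`, then adding a large multiple of `h`
and a small multiple of a strictly positive functional makes it nonnegative on `C`. -/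
theorem IsProperCone.exists_add_mem (hC : IsProperCone C) {h u w : E} (hh : h ∈ dualSet C)
    (hu : StrictPos C u) (hw : ∀ x ∈ C, ⟪h, x⟫ = 0 → 0 ≤ ⟪w, x⟫) {ε : ℝ} (hε : 0 < ε) :
    ∃ K₀ : ℝ, 0 ≤ K₀ ∧ ∀ K, K₀ ≤ K → w + K • h + ε • u ∈ dualSet C := by
  have key : ∃ K₀ : ℝ, 0 ≤ K₀ ∧ ∀ x ∈ C ∩ Metric.sphere (0 : E) 1 ∩ C,
      0 < ⟪w + K₀ • h + ε • u, x⟫ := by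
    refine hC.isCompact_sphere.induction_on
      (p := fun s => ∃ K₀ : ℝ, 0 ≤ K₀ ∧ ∀ x ∈ s ∩ C, 0 < ⟪w + K₀ • h + ε • u, x⟫)
      ⟨0, le_rfl, by simp⟩ ?_ ?_ ?_
    · rintro s t hst ⟨u, hu, h⟩
      exact ⟨u, hu, fun x hx => h x ⟨hst hx.1, hx.2⟩⟩
    · rintro s t ⟨a, ha, h1⟩ ⟨b, hb, h2⟩
      refine ⟨a + b, add_nonneg ha hb, fun x hx => ?_⟩
      have h0 := hh x hx.2
      simp only [inner_add_left, real_inner_smul_left] at h1 h2 ⊢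
      rcases hx.1 with hs | ht
      · nlinarith [h1 x ⟨hs, hx.2⟩]
      · nlinarith [h2 x ⟨ht, hx.2⟩]
    · intro x hx
      have hx0 : x ≠ 0 := by
        rintro rfl
        simpa using hx.2
      have h0 := hh x hx.1
      have hux := mul_pos hε (hu x hx.1 hx0)
      obtain ⟨K, hK, hpos⟩ : ∃ K : ℝ, 0 ≤ K ∧ 0 < ⟪w + K • h + ε • u, x⟫ := by
        simp only [inner_add_left, real_inner_smul_left]
        rcases h0.eq_or_lt with h0 | h0
        · exact ⟨0, le_rfl, by have := hw x hx.1 h0.symm; linarith⟩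
        · refine ⟨|⟪w, x⟫| / ⟪h, x⟫, by positivity, ?_⟩
          rw [div_mul_cancel₀ _ h0.ne']
          have := neg_abs_le ⟪w, x⟫
          linarith
      exact ⟨{y | 0 < ⟪w + K • h + ε • u, y⟫}, mem_nhdsWithin_of_mem_nhds
        ((isOpen_lt continuous_const (by fun_prop)).mem_nhds hpos), K, hK, fun y hy => hy.1⟩
  obtain ⟨K₀, hK₀, h2⟩ := key
  refine ⟨K₀, hK₀, fun K hK => nonneg_of_sphere hC fun x hx => ?_⟩
  have h3 := h2 x ⟨hx, hx.1⟩
  have h0 := hh x hx.1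
  simp only [inner_add_left, real_inner_smul_left] at h3 ⊢
  nlinarith

theorem IsProperCone.exists_sub_smul_mem (hC : IsProperCone C) {v : E} (hv : StrictPos C v)
    (z : E) : ∃ δ : ℝ, 0 < δ ∧ v - δ • z ∈ dualSet C := by
  obtain ⟨K, hK, h⟩ := hC.exists_add_mem hv.mem hv (w := -z) (fun x hx h0 => by
    have : x = 0 := by
      by_contra hne
      exact (hv x hx hne).ne' h0
    simp [this]) one_pos
  have h1 := h K le_rfl
  refine ⟨(K + 1)⁻¹, by positivity, ?_⟩
  have h2 := dualSet_smul (c := (K + 1)⁻¹) (by positivity) h1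
  convert h2 using 1
  have : (K + 1)⁻¹ • (-z + K • v + (1 : ℝ) • v) = ((K + 1)⁻¹ * (K + 1)) • v - (K + 1)⁻¹ • z := by
    module
  rw [this, inv_mul_cancel₀ (by positivity), one_smul]

theorem IsProperCone.isCompact_base (hC : IsProperCone C) {u : E} (hu : StrictPos C u) :
    IsCompact {x ∈ C | ⟪u, x⟫ = 1} := by
  obtain ⟨δ, hδ, hb⟩ : ∃ δ : ℝ, 0 < δ ∧ ∀ x ∈ C ∩ Metric.sphere (0 : E) 1, δ ≤ ⟪u, x⟫ := by
    rcases (C ∩ Metric.sphere (0 : E) 1).eq_empty_or_nonempty with h | h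
    · exact ⟨1, one_pos, by simp [h]⟩
    · obtain ⟨x, hx, hm⟩ := hC.isCompact_sphere.exists_isMinOn h
        (f := fun x => ⟪u, x⟫) (by fun_prop)
      refine ⟨⟪u, x⟫, hu x hx.1 ?_, hm⟩
      rintro rfl
      simpa using hx.2
  refine (isCompact_closedBall (0 : E) δ⁻¹).of_isClosed_subset
    (hC.closed.inter (isClosed_eq (by fun_prop) continuous_const)) ?_
  rintro x ⟨hx, h1⟩
  rw [mem_closedBall_zero_iff]
  have hn : 0 < ‖x‖ := norm_pos_iff.2 (by rintro rfl; simp at h1)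
  have := hb (‖x‖⁻¹ • x) ⟨hC.smul _ (by positivity) _ hx, by
    simp [norm_smul, inv_mul_cancel₀ hn.ne']⟩
  rw [real_inner_smul_right, h1, mul_one] at this
  exact (le_inv_comm₀ hδ hn).1 this

omit [FiniteDimensional ℝ E] in
theorem IsProperCone.smul_base (hC : IsProperCone C) {u x : E} (hu : StrictPos C u) (hx : x ∈ C)
    (h0 : x ≠ 0) : ⟪u, x⟫⁻¹ • x ∈ {x ∈ C | ⟪u, x⟫ = 1} := by
  have := hu x hx h0
  refine ⟨hC.smul _ (by positivity) _ hx, ?_⟩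
  rw [real_inner_smul_right, inv_mul_cancel₀ this.ne']

end Basic

/-- Two decompositions `x 0 + x 2 = x 1 + x 3` in the cone and `f 0 + f 2 = f 1 + f 3` in its
dual that are orthogonal along the diagonal up to an error `ε`. -/
structure Sandwich {E : Type} [NormedAddCommGroup E] [InnerProductSpace ℝ E] (C : Set E)
    (δ R ε : ℝ) (x f : Fin 4 → E) : Prop where
  mem : ∀ i, x i ∈ C
  dual_mem : ∀ i, f i ∈ dualSet C
  rel : x 0 + x 2 = x 1 + x 3
  dual_rel : f 0 + f 2 = f 1 + f 3
  left_mem : f 1 + f 2 - δ • (f 0 + f 2) ∈ dualSet C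
  right_mem : f 2 + f 3 - δ • (f 0 + f 2) ∈ dualSet C
  diag : ∀ i, ⟪f i, x i⟫ ≤ ε
  one_le : 1 ≤ ⟪f 0, x 2⟫
  le_bound : ⟪f 0 + f 2, x 0 + x 2⟫ ≤ R

/-- Sandwiches with arbitrarily small diagonal error exist, with uniform constants. -/
def HasSandwich {E : Type} [NormedAddCommGroup E] [InnerProductSpace ℝ E] (C : Set E) : Prop :=
  ∃ δ R : ℝ, 0 < δ ∧ δ ≤ 1 / 2 ∧ ∀ ε : ℝ, 0 < ε → ∃ x f : Fin 4 → E, Sandwich C δ R ε x f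

section Sandwich

variable {E : Type} [NormedAddCommGroup E] [InnerProductSpace ℝ E] {C : Set E}
  {δ R ε : ℝ} {x f : Fin 4 → E}

theorem Sandwich.reverse (h : Sandwich C δ R ε x f) :
    Sandwich C δ R ε ![x 0, x 3, x 2, x 1] ![f 0, f 3, f 2, f 1] where
  mem := by simp [Fin.forall_fin_succ, h.mem]
  dual_mem := by simp [Fin.forall_fin_succ, h.dual_mem]
  rel := by simpa [add_comm (x 3)] using h.rel
  dual_rel := by simpa [add_comm (f 3)] using h.dual_rel
  left_mem := by simpa [add_comm (f 3)] using h.right_mem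
  right_mem := by simpa [add_comm (f 2) (f 1)] using h.left_mem
  diag := by simp [Fin.forall_fin_succ, h.diag]
  one_le := by simpa using h.one_le
  le_bound := by simpa using h.le_bound

theorem Sandwich.row (h : Sandwich C δ R ε x f) (i : Fin 4) :
    ⟪f i, x 0⟫ + ⟪f i, x 2⟫ = ⟪f i, x 1⟫ + ⟪f i, x 3⟫ := by
  rw [← inner_add_right, ← inner_add_right, h.rel]

theorem Sandwich.col (h : Sandwich C δ R ε x f) (i : Fin 4) :
    ⟪f 0, x i⟫ + ⟪f 2, x i⟫ = ⟪f 1, x i⟫ + ⟪f 3, x i⟫ := by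
  rw [← inner_add_left, ← inner_add_left, h.dual_rel]

theorem Sandwich.nonneg (h : Sandwich C δ R ε x f) (i j : Fin 4) : 0 ≤ ⟪f i, x j⟫ :=
  h.dual_mem i _ (h.mem j)

theorem Sandwich.le (h : Sandwich C δ R ε x f) (i j : Fin 4) : ⟪f i, x j⟫ ≤ R := by
  have hb := h.le_bound
  have hr := h.row
  have hc := h.col
  have hn := h.nonneg
  simp only [inner_add_left, inner_add_right] at hb
  have h1 : ⟪f i, x j⟫ ≤ ⟪f i, x 0⟫ + ⟪f i, x 2⟫ := by
    have := hr i
    have n0 := hn i 0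
    have n1 := hn i 1
    have n2 := hn i 2
    have n3 := hn i 3
    fin_cases j <;> simp <;> linarith
  have h2 : ∀ k, ⟪f i, x k⟫ ≤ ⟪f 0, x k⟫ + ⟪f 2, x k⟫ := by
    intro k
    have := hc k
    have n0 := hn 0 k
    have n1 := hn 1 k
    have n2 := hn 2 k
    have n3 := hn 3 k
    fin_cases i <;> simp <;> linarith
  linarith [h2 0, h2 2]

end Sandwich

theorem min_mul_le_bilinear {x₀ x₁ x₂ x₃ y₀ y₁ y₂ y₃ : ℝ} (hx₀ : 0 ≤ x₀) (hx₁ : 0 ≤ x₁)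
    (hy₀ : 0 ≤ y₀) (hy₁ : 0 ≤ y₁) (hy₂ : 0 ≤ y₂) (hy₃ : 0 ≤ y₃)
    (hx : x₀ + x₂ = x₁ + x₃) (hy : y₀ + y₂ = y₁ + y₃) :
    min x₂ x₃ * y₂ ≤ x₂ * y₂ + x₀ * y₁ + x₁ * y₀ - x₁ * y₁ := by
  rcases le_total x₁ x₀ with h | h
  · have h1 := mul_le_mul_of_nonneg_right (min_le_left x₂ x₃) hy₂
    linarith [mul_nonneg (sub_nonneg.2 h) hy₁, mul_nonneg hx₁ hy₀]
  · have h1 := mul_le_mul_of_nonneg_right (min_le_right x₂ x₃) hy₂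
    obtain rfl : x₂ = x₁ + x₃ - x₀ := by linarith
    obtain rfl : y₀ = y₁ + y₃ - y₂ := by linarith
    linarith [mul_nonneg (sub_nonneg.2 h) hy₃, mul_nonneg hx₀ hy₀]

theorem witness_nonneg {f₀ f₁ f₂ f₃ g₀ g₁ g₂ g₃ δ δ' : ℝ} (hf₀ : 0 ≤ f₀) (hf₁ : 0 ≤ f₁)
    (hf₂ : 0 ≤ f₂) (hf₃ : 0 ≤ f₃) (hg₀ : 0 ≤ g₀) (hg₁ : 0 ≤ g₁) (hg₂ : 0 ≤ g₂) (hg₃ : 0 ≤ g₃)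
    (hδ : 0 < δ) (hδ₁ : δ ≤ 1) (hδ' : 0 < δ') (hδ'₁ : δ' ≤ 1)
    (hf : f₀ + f₂ = f₁ + f₃) (hg : g₀ + g₂ = g₁ + g₃)
    (hf₁₂ : δ * (f₀ + f₂) ≤ f₁ + f₂) (hf₂₃ : δ * (f₀ + f₂) ≤ f₂ + f₃)
    (hg₁₂ : δ' * (g₀ + g₂) ≤ g₁ + g₂) (hg₂₃ : δ' * (g₀ + g₂) ≤ g₂ + g₃) :
    δ * δ' / 4 * (f₀ * g₀) ≤ f₀ * g₂ - f₀ * g₁ + f₃ * g₀ + f₁ * g₁ := by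
  have hfg := mul_nonneg hf₀ hg₀
  have hδg : δ' * g₀ ≤ g₁ + g₂ := by nlinarith
  have hδg' : δ' * g₀ ≤ g₂ + g₃ := by nlinarith
  have hk : δ * δ' ≤ δ := by nlinarith
  rcases le_total f₀ f₁ with h | h
  · rcases le_total (δ / 4 * f₀) f₃ with h3 | h3
    · nlinarith [mul_nonneg hf₀ hg₂, mul_nonneg (sub_nonneg.2 h) hg₁,
        mul_nonneg (sub_nonneg.2 h3) hg₀, mul_nonneg (sub_nonneg.2 hk) hfg]
    · have h4 : δ / 2 * f₀ ≤ f₁ - f₀ := by nlinarith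
      have h5 : δ / 2 * f₀ ≤ f₀ := by nlinarith
      have e1 : 0 ≤ (f₁ - f₀ - δ / 2 * f₀) * g₁ := mul_nonneg (by linarith) hg₁
      have e2 : 0 ≤ (f₀ - δ / 2 * f₀) * g₂ := mul_nonneg (by linarith) hg₂
      have e3 : 0 ≤ δ / 2 * f₀ * (g₁ + g₂ - δ' * g₀) :=
        mul_nonneg (by positivity) (by linarith)
      have e4 := mul_nonneg hf₃ hg₀
      have e5 : 0 ≤ δ * δ' * (f₀ * g₀) := by positivity
      linarith
  · have key : f₀ * g₂ - f₀ * g₁ + f₃ * g₀ + f₁ * g₁ = f₁ * g₂ + f₂ * g₀ + (f₀ - f₁) * g₃ := by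
      obtain rfl : f₃ = f₀ + f₂ - f₁ := by linarith
      obtain rfl : g₃ = g₀ + g₂ - g₁ := by linarith
      ring
    rw [key]
    rcases le_total (δ / 4 * f₀) f₂ with h3 | h3
    · nlinarith [mul_nonneg hf₁ hg₂, mul_nonneg (sub_nonneg.2 h) hg₃,
        mul_nonneg (sub_nonneg.2 h3) hg₀, mul_nonneg (sub_nonneg.2 hk) hfg]
    · have h4 : δ / 2 * f₀ ≤ f₁ := by nlinarith
      have h5 : δ / 2 * f₀ ≤ f₀ - f₁ := by nlinarith
      have e1 : 0 ≤ (f₀ - f₁ - δ / 2 * f₀) * g₃ := mul_nonneg (by linarith) hg₃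
      have e2 : 0 ≤ (f₁ - δ / 2 * f₀) * g₂ := mul_nonneg (by linarith) hg₂
      have e3 : 0 ≤ δ / 2 * f₀ * (g₂ + g₃ - δ' * g₀) :=
        mul_nonneg (by positivity) (by linarith)
      have e4 := mul_nonneg hf₂ hg₀
      have e5 : 0 ≤ δ * δ' * (f₀ * g₀) := by positivity
      linarith


/-- The value of the bilinear form on the pair of functionals whose values are `a` and `b`. -/
def pairing (a b : Fin 4 → ℝ) : ℝ := a 2 * b 2 + a 0 * b 1 + a 1 * b 0 - a 1 * b 1

theorem pairing_witness_le {A B : Fin 4 → Fin 4 → ℝ} {R ε κ : ℝ}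
    (hκ : 0 ≤ κ) (hκ₁ : κ ≤ 1) (hε : 0 ≤ ε)
    (hA : ∀ i j, 0 ≤ A i j) (hB : ∀ i j, 0 ≤ B i j)
    (hAR : ∀ i j, A i j ≤ R) (hBR : ∀ i j, B i j ≤ R)
    (hAε : ∀ i, A i i ≤ ε) (hBε : ∀ i, B i i ≤ ε)
    (hAr : ∀ i, A i 0 + A i 2 = A i 1 + A i 3) (hBr : ∀ i, B i 0 + B i 2 = B i 1 + B i 3)
    (hAc : ∀ i, A 0 i + A 2 i = A 1 i + A 3 i) (hBc : ∀ i, B 0 i + B 2 i = B 1 i + B 3 i)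
    (hA₁ : 1 / 2 ≤ A 0 3) (hB₁ : 1 ≤ B 0 2)
    (hAB : (A 0 3 - A 1 2) * (B 0 3 - B 1 2) ≤ ε * R) :
    pairing (A 0) (B 2) - pairing (A 0) (B 1) + pairing (A 3) (B 0) + pairing (A 1) (B 1)
      - κ * pairing (A 0) (B 0) ≤ 30 * (ε * R) - κ / 2 := by
  have hR : 0 ≤ R := (hA 0 0).trans (hAR 0 0)
  have hεR : 0 ≤ ε * R := mul_nonneg hε hR
  have p1 : ∀ i k l, 0 ≤ A i i * B k l := fun i k l => mul_nonneg (hA _ _) (hB _ _)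
  have p2 : ∀ i k l, A i i * B k l ≤ ε * R := fun i k l =>
    mul_le_mul (hAε i) (hBR k l) (hB _ _) hε
  have p3 : ∀ i k l, 0 ≤ A k l * B i i := fun i k l => mul_nonneg (hA _ _) (hB _ _)
  have p4 : ∀ i k l, A k l * B i i ≤ ε * R := fun i k l => by
    rw [mul_comm]; exact mul_le_mul (hBε i) (hAR k l) (hA _ _) hε
  have h00 : 1 / 2 - 2 * (ε * R) ≤ pairing (A 0) (B 0) := by
    have e : pairing (A 0) (B 0) = A 0 3 * B 0 2 + A 0 1 * B 0 3 - A 0 0 * B 0 3 + A 0 0 * B 0 0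
        + (A 0 3 * B 0 1 - A 0 3 * B 0 2 + A 0 3 * B 0 3 - A 0 3 * B 0 0) := by
      have h1 : A 0 2 = A 0 1 + A 0 3 - A 0 0 := by linarith [hAr 0]
      have h2 : B 0 2 = B 0 1 + B 0 3 - B 0 0 := by linarith [hBr 0]
      simp only [pairing, h1, h2]
      ring
    have e' : A 0 3 * B 0 1 - A 0 3 * B 0 2 + A 0 3 * B 0 3 - A 0 3 * B 0 0 = 0 := by
      have h2 : B 0 2 = B 0 1 + B 0 3 - B 0 0 := by linarith [hBr 0]
      rw [h2]
      ring
    have h3 : 1 / 2 * 1 ≤ A 0 3 * B 0 2 := mul_le_mul hA₁ hB₁ zero_le_one (hA _ _)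
    linarith [p2 0 0 3, p1 0 0 0, mul_nonneg (hA 0 1) (hB 0 3)]
  have hS : pairing (A 0) (B 2) - pairing (A 0) (B 1) + pairing (A 3) (B 0) + pairing (A 1) (B 1)
      ≤ (A 0 3 - A 1 2) * (B 0 3 - B 1 2) + 20 * (ε * R) := by
    have rel : ∀ T : Fin 4 → Fin 4 → ℝ, (∀ i, T i 0 + T i 2 = T i 1 + T i 3) →
        (∀ i, T 0 i + T 2 i = T 1 i + T 3 i) →
        T 0 2 = T 0 1 + T 0 3 - T 0 0 ∧ T 3 2 = T 0 1 + T 0 3 - T 0 0 + T 2 2 - T 1 2 ∧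
        T 1 3 = T 1 0 + T 1 2 - T 1 1 ∧ T 2 0 = T 2 1 + T 1 0 + T 1 2 - T 1 1 + T 3 3 - T 0 3 - T 2 2 ∧
        T 3 0 = T 0 0 + T 2 1 + T 1 2 - T 1 1 + T 3 3 - T 0 3 - T 2 2 ∧
        T 3 1 = T 0 1 + T 2 1 - T 1 1 := by
      intro T h1 h2
      have a0 := h1 0
      have a1 := h1 1
      have a2 := h1 2
      have a3 := h1 3
      have b0 := h2 0
      have b1 := h2 1
      have b2 := h2 2
      have b3 := h2 3
      refine ⟨?_, ?_, ?_, ?_, ?_, ?_⟩ <;> linarith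
    obtain ⟨a1, a2, a3, a4, a5, a6⟩ := rel A hAr hAc
    obtain ⟨b1, b2, b3, b4, b5, b6⟩ := rel B hBr hBc
    simp only [pairing, a1, a2, a5, a6, b1, b4]
    linarith [p4 3 0 1, p3 0 0 3, p4 2 0 3, p4 0 1 2, p4 1 1 0, p4 0 2 1, p1 0 0 3, p2 0 1 2,
      p2 0 2 1, p2 0 0 0, p1 0 1 1, p1 0 2 2, p2 1 1 0, p1 1 0 0, p1 1 1 1, p2 2 0 3, p1 2 0 0,
      p2 3 0 1]
  nlinarith

/-- Two cones with sandwiches admit a bilinear form on the product of their duals that is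
positive but is detected by a witness that is nonnegative on product elements. -/
theorem exists_form_and_witness {E F : Type} [NormedAddCommGroup E] [InnerProductSpace ℝ E]
    [NormedAddCommGroup F] [InnerProductSpace ℝ F] {C : Set E} {K : Set F}
    (hC : HasSandwich C) (hK : HasSandwich K) :
    ∃ (x f : Fin 4 → E) (y g : Fin 4 → F) (κ : ℝ),
      (∀ i, x i ∈ C) ∧ (∀ i, f i ∈ dualSet C) ∧ (∀ i, y i ∈ K) ∧ (∀ i, g i ∈ dualSet K) ∧
      x 0 + x 2 = x 1 + x 3 ∧ y 0 + y 2 = y 1 + y 3 ∧ x 2 ≠ 0 ∧ x 3 ≠ 0 ∧ y 2 ≠ 0 ∧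
      (∀ p ∈ C, ∀ q ∈ K, κ * (⟪f 0, p⟫ * ⟪g 0, q⟫) ≤ ⟪f 0, p⟫ * ⟪g 2, q⟫ - ⟪f 0, p⟫ * ⟪g 1, q⟫
        + ⟪f 3, p⟫ * ⟪g 0, q⟫ + ⟪f 1, p⟫ * ⟪g 1, q⟫) ∧
      (∀ P : Fin 4 → Fin 4 → ℝ,
        (∀ i j, P i j = pairing (fun k => ⟪f i, x k⟫) (fun k => ⟪g j, y k⟫)) →
        P 0 2 - P 0 1 + P 3 0 + P 1 1 - κ * P 0 0 < 0) := by
  obtain ⟨δ, R, hδ, hδ₁, hC⟩ := hC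
  obtain ⟨δ', R', hδ', hδ'₁, hK⟩ := hK
  set κ := δ * δ' / 4 with hκdef
  have hκ : 0 < κ := by positivity
  have hκ₁ : κ ≤ 1 := by rw [hκdef]; nlinarith
  set M := max (max R R') 1 with hM
  have hRM : R ≤ M := (le_max_left _ _).trans (le_max_left _ _)
  have hRM' : R' ≤ M := (le_max_right _ _).trans (le_max_left _ _)
  have hM1 : 1 ≤ M := le_max_right _ _
  set ε := κ / (100 * M) with hεdef
  have hε : 0 < ε := by positivity
  have hεM : ε * M = κ / 100 := by rw [hεdef]; field_simp
  have hε2 : ε ≤ 1 / 100 := by nlinarith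
  obtain ⟨x, f, hxf, hA₁⟩ : ∃ x f : Fin 4 → E, Sandwich C δ R ε x f ∧ 1 / 2 ≤ ⟪f 0, x 3⟫ := by
    obtain ⟨x, f, h⟩ := hC ε hε
    rcases le_or_gt (1 / 2) ⟪f 0, x 3⟫ with h' | h'
    · exact ⟨x, f, h, h'⟩
    · refine ⟨_, _, h.reverse, ?_⟩
      have := h.row 0
      have h1 := h.one_le
      have h2 := h.nonneg 0 0
      simp
      linarith
  obtain ⟨y, g, hyg, hAB⟩ : ∃ y g : Fin 4 → F, Sandwich K δ' R' ε y g ∧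
      (⟪f 0, x 3⟫ - ⟪f 1, x 2⟫) * (⟪g 0, y 3⟫ - ⟪g 1, y 2⟫) ≤ ε * M := by
    obtain ⟨y, g, h⟩ := hK ε hε
    rcases le_total ((⟪f 0, x 3⟫ - ⟪f 1, x 2⟫) * (⟪g 0, y 3⟫ - ⟪g 1, y 2⟫)) 0 with h' | h'
    · exact ⟨y, g, h, h'.trans (by positivity)⟩
    · refine ⟨_, _, h.reverse, ?_⟩
      have e : ⟪g 0, y 1⟫ - ⟪g 3, y 2⟫
          = ⟪g 0, y 0⟫ - ⟪g 2, y 2⟫ - (⟪g 0, y 3⟫ - ⟪g 1, y 2⟫) := by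
        have := h.row 0
        have := h.col 2
        linarith
      have h0 := h.nonneg 0 0
      have h2 := h.nonneg 2 2
      have d0 := h.diag 0
      have d2 := h.diag 2
      have r1 : |⟪f 0, x 3⟫ - ⟪f 1, x 2⟫| ≤ M := by
        rw [abs_le]
        constructor <;> linarith [hxf.nonneg 0 3, hxf.nonneg 1 2, hxf.le 0 3, hxf.le 1 2]
      have r2 : |⟪g 0, y 0⟫ - ⟪g 2, y 2⟫| ≤ ε := by
        rw [abs_le]
        constructor <;> linarith
      have r3 : (⟪f 0, x 3⟫ - ⟪f 1, x 2⟫) * (⟪g 0, y 0⟫ - ⟪g 2, y 2⟫) ≤ ε * M := by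
        refine (le_abs_self _).trans ?_
        rw [abs_mul, mul_comm]
        exact mul_le_mul r2 r1 (abs_nonneg _) hε.le
      simp [e]
      linarith
  refine ⟨x, f, y, g, κ, hxf.mem, hxf.dual_mem, hyg.mem, hyg.dual_mem, hxf.rel, hyg.rel,
    ?_, ?_, ?_, ?_, ?_⟩
  · intro h
    have := hxf.one_le
    rw [h, inner_zero_right] at this
    linarith
  · intro h
    rw [h, inner_zero_right] at hA₁
    linarith
  · intro h
    have := hyg.one_le
    rw [h, inner_zero_right] at this
    linarith
  · intro p hp q hq
    have l1 := hxf.left_mem p hp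
    have r1 := hxf.right_mem p hp
    have l2 := hyg.left_mem q hq
    have r2 := hyg.right_mem q hq
    have e1 := congrArg (fun z => ⟪z, p⟫) hxf.dual_rel
    have e2 := congrArg (fun z => ⟪z, q⟫) hyg.dual_rel
    simp only [inner_sub_left, inner_add_left, real_inner_smul_left] at l1 r1 l2 r2 e1 e2
    exact witness_nonneg (hxf.dual_mem 0 p hp) (hxf.dual_mem 1 p hp) (hxf.dual_mem 2 p hp)
      (hxf.dual_mem 3 p hp) (hyg.dual_mem 0 q hq) (hyg.dual_mem 1 q hq) (hyg.dual_mem 2 q hq)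
      (hyg.dual_mem 3 q hq) hδ (by linarith) hδ' (by linarith) e1 e2 (by linarith) (by linarith)
      (by linarith) (by linarith)
  · have := pairing_witness_le (A := fun i j => ⟪f i, x j⟫) (B := fun i j => ⟪g i, y j⟫)
      hκ.le hκ₁ hε.le hxf.nonneg hyg.nonneg (fun i j => (hxf.le i j).trans hRM)
      (fun i j => (hyg.le i j).trans hRM') hxf.diag hyg.diag hxf.row hyg.row hxf.col hyg.col
      hA₁ hyg.one_le hAB
    intro P hP
    simp only [hP]
    linarith

/-- A cone generated by a basis of the space; `l` is the dual basis. -/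
def Simplicial {E : Type} [NormedAddCommGroup E] [InnerProductSpace ℝ E] (C : Set E) : Prop :=
  ∃ (ι : Type) (_ : Fintype ι) (_ : DecidableEq ι) (e l : ι → E),
    (∀ i, e i ∈ C) ∧ (∀ i, l i ∈ dualSet C) ∧ (∀ x, x = ∑ i, ⟪l i, x⟫ • e i) ∧
    ∀ i j, ⟪l i, e j⟫ = if i = j then 1 else 0

/-- The span of the face of `C` on which `h` vanishes. -/
def faceSpan {E : Type} [NormedAddCommGroup E] [InnerProductSpace ℝ E] (C : Set E) (h : E) :
    Submodule ℝ E := Submodule.span ℝ {x ∈ C | ⟪h, x⟫ = 0}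

/-- The face of `C` on which `h` vanishes, as a cone in its span. -/
def faceCone {E : Type} [NormedAddCommGroup E] [InnerProductSpace ℝ E] (C : Set E) (h : E) :
    Set (faceSpan C h) := {x | (x : E) ∈ C}

/-- The face of `C` on which `h` vanishes is generated by linearly independent vectors. -/
def SimplicialFace {E : Type} [NormedAddCommGroup E] [InnerProductSpace ℝ E] (C : Set E)
    (h : E) : Prop :=
  ∃ (ι : Type) (_ : Fintype ι) (e : ι → E), (∀ i, e i ∈ C ∧ ⟪h, e i⟫ = 0) ∧
    LinearIndependent ℝ e ∧
    ∀ x ∈ C, ⟪h, x⟫ = 0 → ∃ c : ι → ℝ, (∀ i, 0 ≤ c i) ∧ x = ∑ i, c i • e i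

section Faces

variable {E : Type} [NormedAddCommGroup E] [InnerProductSpace ℝ E] {C : Set E} {h : E}

theorem inner_faceSpan (x : faceSpan C h) : ⟪h, (x : E)⟫ = 0 := by
  have : faceSpan C h ≤ (innerₛₗ ℝ h).ker := Submodule.span_le.2 fun y hy => by
    simpa using hy.2
  simpa using this x.2

theorem faceSpan_ne_top (hh : h ≠ 0) : faceSpan C h ≠ ⊤ := fun htop => by
  have : h ∈ faceSpan C h := htop ▸ Submodule.mem_top
  exact hh (inner_self_eq_zero.1 (inner_faceSpan ⟨h, this⟩))

theorem mem_faceSpan {x : E} (hx : x ∈ C) (h0 : ⟪h, x⟫ = 0) : x ∈ faceSpan C h :=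
  Submodule.subset_span ⟨hx, h0⟩

theorem IsProperCone.face (hC : IsProperCone C) : IsProperCone (faceCone C h) where
  closed := hC.closed.preimage continuous_subtype_val
  zero := by simpa [faceCone] using hC.zero
  add := fun x hx y hy => hC.add _ hx _ hy
  smul := fun c hc x hx => hC.smul c hc _ hx
  pointed := fun x hx hx' => Subtype.ext (hC.pointed _ hx hx')
  gen := fun f hf => by
    have : faceSpan C h ≤ (innerₛₗ ℝ (f : E)).ker := Submodule.span_le.2 fun y hy => by
      simpa using hf ⟨y, mem_faceSpan hy.1 hy.2⟩ hy.1
    have h1 := this f.2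
    simpa using h1

theorem Simplicial.simplicialFace (H : Simplicial (faceCone C h)) : SimplicialFace C h := by
  obtain ⟨ι, _, _, e, l, he, hl, hx, hle⟩ := H
  refine ⟨ι, inferInstance, fun i => e i, fun i => ⟨he i, inner_faceSpan _⟩, ?_, fun x hxC hx0 => ?_⟩
  · refine LinearIndependent.map' (v := e) ?_ (faceSpan C h).subtype (by simp)
    rw [Fintype.linearIndependent_iff]
    intro g hg i
    have := congrArg (fun z => ⟪l i, z⟫) hg
    simp only [inner_sum, real_inner_smul_right, hle, inner_zero_right] at this
    simpa using this
  · have hxm := mem_faceSpan hxC hx0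
    refine ⟨fun i => ⟪l i, (⟨x, hxm⟩ : faceSpan C h)⟫, fun i => hl i _ hxC, ?_⟩
    have := congrArg (fun z : faceSpan C h => (z : E)) (hx ⟨x, hxm⟩)
    simpa using this

variable [FiniteDimensional ℝ E]

theorem finrank_faceSpan_lt (hh : h ≠ 0) :
    Module.finrank ℝ (faceSpan C h) < Module.finrank ℝ E :=
  Submodule.finrank_lt (faceSpan_ne_top hh)

theorem Simplicial.of_dual (hC : IsProperCone C) (H : Simplicial (dualSet C)) :
    Simplicial C := by
  obtain ⟨ι, _, _, e, l, he, hl, hx, hle⟩ := H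
  rw [hC.dual_dual] at hl
  refine ⟨ι, inferInstance, inferInstance, l, e, hl, he, fun x => ?_, fun i j => ?_⟩
  · refine ext_inner_left ℝ fun v => ?_
    rw [inner_sum]
    conv_lhs => rw [hx v]
    rw [sum_inner]
    refine Finset.sum_congr rfl fun i _ => ?_
    rw [real_inner_smul_left, real_inner_smul_right, real_inner_comm v (l i), mul_comm]
  · rw [real_inner_comm, hle]
    simp [eq_comm]

theorem HasSandwich.of_face (hC : IsProperCone C) (hh : h ∈ dualSet C)
    (H : HasSandwich (faceCone C h)) : HasSandwich C := by
  obtain ⟨δ, R, hδ, hδ₁, H⟩ := H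
  obtain ⟨u, hu⟩ := hC.exists_strictPos
  refine ⟨δ, R + 1, hδ, hδ₁, fun ε hε => ?_⟩
  obtain ⟨x, f, hs⟩ := H (ε / 2) (by positivity)
  have hxC : ∀ i, (x i : E) ∈ C := hs.mem
  have hux : ∀ i, 0 ≤ ⟪u, (x i : E)⟫ := fun i => hu.mem _ (hxC i)
  set s := ∑ i, ⟪u, (x i : E)⟫ with hsdef
  have hsum : s = ⟪u, (x 0 : E)⟫ + ⟪u, (x 1 : E)⟫ + ⟪u, (x 2 : E)⟫ + ⟪u, (x 3 : E)⟫ :=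
    Fin.sum_univ_four _
  have hs0 : 0 ≤ s := Finset.sum_nonneg fun i _ => hux i
  have hxs : ∀ i, ⟪u, (x i : E)⟫ ≤ s := fun i =>
    Finset.single_le_sum (f := fun i => ⟪u, (x i : E)⟫) (fun i _ => hux i) (Finset.mem_univ i)
  set η := min ε 1 / (2 * (1 + s)) with hη
  have hη0 : 0 < η := by positivity
  have hηs : η * s ≤ min ε 1 / 2 := by
    have : η * (1 + s) = min ε 1 / 2 := by rw [hη]; field_simp
    linarith
  have hηx : ∀ i, η * ⟪u, (x i : E)⟫ ≤ min ε 1 / 2 := fun i =>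
    (mul_le_mul_of_nonneg_left (hxs i) hη0.le).trans hηs
  have hlift : ∀ w ∈ dualSet (faceCone C h), ∃ K₀ : ℝ, 0 ≤ K₀ ∧
      ∀ K, K₀ ≤ K → (w : E) + K • h + η • u ∈ dualSet C := fun w hw =>
    hC.exists_add_mem hh hu (fun y hy h0 => hw ⟨y, mem_faceSpan hy h0⟩ hy) hη0
  choose K hK0 hK using fun i => hlift _ (hs.dual_mem i)
  obtain ⟨K₄, hK₄0, hK₄⟩ := hlift _ hs.left_mem
  obtain ⟨K₅, hK₅0, hK₅⟩ := hlift _ hs.right_mem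
  set L := ∑ i, K i + K₄ + K₅ with hL
  have hKL : ∀ i, K i ≤ L := fun i => by
    have := Finset.single_le_sum (f := K) (fun i _ => hK0 i) (Finset.mem_univ i)
    linarith
  have hsumK : 0 ≤ ∑ i, K i := Finset.sum_nonneg fun i _ => hK0 i
  have hL0 : 0 ≤ L := by linarith
  have hrest : (1 - 2 * δ) • (L • h + η • u) ∈ dualSet C :=
    dualSet_smul (by linarith) (dualSet_add (dualSet_smul hL0 hh) (dualSet_smul hη0.le hu.mem))
  have hval : ∀ i j, ⟪(f i : E) + L • h + η • u, (x j : E)⟫ = ⟪f i, x j⟫ + η * ⟪u, (x j : E)⟫ := by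
    intro i j
    rw [inner_add_left, inner_add_left, real_inner_smul_left, real_inner_smul_left,
      inner_faceSpan, mul_zero, add_zero, Submodule.coe_inner]
  refine ⟨fun i => x i, fun i => (f i : E) + L • h + η • u, hxC, fun i => hK i L (hKL i), ?_, ?_,
    ?_, ?_, fun i => ?_, ?_, ?_⟩
  · exact_mod_cast congrArg (fun z : faceSpan C h => (z : E)) hs.rel
  · have := congrArg (fun z : faceSpan C h => (z : E)) hs.dual_rel
    simp only [Submodule.coe_add] at this
    linear_combination (norm := module) this
  · have := dualSet_add (hK₄ L (by linarith)) hrest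
    convert this using 1
    simp only [Submodule.coe_add, Submodule.coe_sub, Submodule.coe_smul]
    module
  · have := dualSet_add (hK₅ L (by linarith)) hrest
    convert this using 1
    simp only [Submodule.coe_add, Submodule.coe_sub, Submodule.coe_smul]
    module
  · rw [hval]
    have := hs.diag i
    have := hηx i
    have := min_le_left ε 1
    linarith
  · rw [hval]
    have := hs.one_le
    have := mul_nonneg hη0.le (hux 2)
    linarith
  · have hb := hs.le_bound
    simp only [inner_add_left (f 0), inner_add_right] at hb
    rw [inner_add_left ((f 0 : E) + L • h + η • u), inner_add_right, inner_add_right, hval, hval,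
      hval, hval]
    have := min_le_right ε 1
    have : η * (⟪u, (x 0 : E)⟫ + ⟪u, (x 2 : E)⟫) ≤ η * s :=
      mul_le_mul_of_nonneg_left (by linarith [hux 1, hux 3]) hη0.le
    linarith

theorem HasSandwich.of_quotient (hC : IsProperCone C) {ξ : E} (hξ : ξ ∈ C)
    (H : HasSandwich (dualSet (faceCone (dualSet C) ξ))) : HasSandwich C := by
  obtain ⟨δ, R, hδ, hδ₁, H⟩ := H
  have hD := hC.dual
  obtain ⟨p, hp⟩ := hD.exists_strictPos
  have hpC : p ∈ C := hC.dual_dual ▸ hp.mem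
  refine ⟨δ, R + 1, hδ, hδ₁, fun ε hε => ?_⟩
  obtain ⟨x, f, hs⟩ := H (ε / 2) (by positivity)
  have hdd : dualSet (dualSet (faceCone (dualSet C) ξ)) = faceCone (dualSet C) ξ :=
    hD.face.dual_dual
  have hfD : ∀ i, (f i : E) ∈ dualSet C := fun i => by
    have := hs.dual_mem i
    rw [hdd] at this
    exact this
  have hpf : ∀ i, 0 ≤ ⟪(f i : E), p⟫ := fun i => hfD i _ hpC
  set s := ∑ i, ⟪(f i : E), p⟫ with hsdef
  have hsum : s = ⟪(f 0 : E), p⟫ + ⟪(f 1 : E), p⟫ + ⟪(f 2 : E), p⟫ + ⟪(f 3 : E), p⟫ :=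
    Fin.sum_univ_four _
  have hs0 : 0 ≤ s := Finset.sum_nonneg fun i _ => hpf i
  have hfs : ∀ i, ⟪(f i : E), p⟫ ≤ s := fun i =>
    Finset.single_le_sum (f := fun i => ⟪(f i : E), p⟫) (fun i _ => hpf i) (Finset.mem_univ i)
  set η := min ε 1 / (2 * (1 + s)) with hη
  have hη0 : 0 < η := by positivity
  have hηs : η * s ≤ min ε 1 / 2 := by
    have : η * (1 + s) = min ε 1 / 2 := by rw [hη]; field_simp
    linarith
  have hηf : ∀ i, η * ⟪(f i : E), p⟫ ≤ min ε 1 / 2 := fun i =>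
    (mul_le_mul_of_nonneg_left (hfs i) hη0.le).trans hηs
  have hlift : ∀ w ∈ dualSet (faceCone (dualSet C) ξ), ∃ K₀ : ℝ, 0 ≤ K₀ ∧
      ∀ K, K₀ ≤ K → (w : E) + K • ξ + η • p ∈ C := fun w hw => by
    obtain ⟨K₀, h0, h1⟩ := hD.exists_add_mem (h := ξ) (by rw [hC.dual_dual]; exact hξ) hp
      (fun y hy h0 => hw ⟨y, mem_faceSpan hy h0⟩ hy) hη0
    rw [hC.dual_dual] at h1
    exact ⟨K₀, h0, h1⟩
  choose K hK0 hK using fun i => hlift _ (hs.mem i)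
  set L := ∑ i, K i with hL
  have hKL : ∀ i, K i ≤ L := fun i =>
    Finset.single_le_sum (f := K) (fun i _ => hK0 i) (Finset.mem_univ i)
  have hval : ∀ i j, ⟪(f i : E), (x j : E) + L • ξ + η • p⟫ = ⟪f i, x j⟫ + η * ⟪(f i : E), p⟫ := by
    intro i j
    rw [inner_add_right, inner_add_right, real_inner_smul_right, real_inner_smul_right,
      real_inner_comm ξ, inner_faceSpan, mul_zero, add_zero, Submodule.coe_inner]
  refine ⟨fun i => (x i : E) + L • ξ + η • p, fun i => f i, fun i => hK i L (hKL i), hfD, ?_, ?_,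
    ?_, ?_, fun i => ?_, ?_, ?_⟩
  · have := congrArg (fun z : faceSpan (dualSet C) ξ => (z : E)) hs.rel
    simp only [Submodule.coe_add] at this
    linear_combination (norm := module) this
  · exact_mod_cast congrArg (fun z : faceSpan (dualSet C) ξ => (z : E)) hs.dual_rel
  · have := hs.left_mem
    rw [hdd] at this
    exact this
  · have := hs.right_mem
    rw [hdd] at this
    exact this
  · rw [hval]
    have := hs.diag i
    have := hηf i
    have := min_le_left ε 1
    linarith
  · rw [hval]
    have := hs.one_le
    have := mul_nonneg hη0.le (hpf 0)
    linarith
  · have hb := hs.le_bound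
    simp only [inner_add_left, inner_add_right (f _)] at hb
    rw [inner_add_left, inner_add_right _ ((x 0 : E) + L • ξ + η • p),
      inner_add_right _ ((x 0 : E) + L • ξ + η • p), hval, hval, hval, hval]
    have := min_le_right ε 1
    have : η * (⟪(f 0 : E), p⟫ + ⟪(f 2 : E), p⟫) ≤ η * s :=
      mul_le_mul_of_nonneg_left (by linarith [hpf 1, hpf 3]) hη0.le
    linarith

end Faces

/-- `χ` is a functional exposing the extreme ray of `C` through `ξ`. -/
structure Exposes {E : Type} [NormedAddCommGroup E] [InnerProductSpace ℝ E] (C : Set E)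
    (ξ χ : E) : Prop where
  mem : ξ ∈ C
  ne_zero : ξ ≠ 0
  dual_mem : χ ∈ dualSet C
  inner_eq_zero : ⟪χ, ξ⟫ = 0
  eq_smul : ∀ x ∈ C, ⟪χ, x⟫ = 0 → ∃ c : ℝ, x = c • ξ

section Exposed

variable {E : Type} [NormedAddCommGroup E] [InnerProductSpace ℝ E] {C : Set E}

theorem IsProperCone.nonneg_of_smul_mem (hC : IsProperCone C) {ξ : E} (hξ : ξ ∈ C) (h0 : ξ ≠ 0)
    {c : ℝ} (h : c • ξ ∈ C) : 0 ≤ c := by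
  by_contra! hc
  have h1 := hC.pointed _ h (by rw [← neg_smul]; exact hC.smul _ (by linarith) _ hξ)
  rcases smul_eq_zero.1 h1 with h2 | h2
  · exact hc.ne h2
  · exact h0 h2

theorem Exposes.exists_nonneg (hC : IsProperCone C) {ξ χ x : E} (h : Exposes C ξ χ) (hx : x ∈ C)
    (h0 : ⟪χ, x⟫ = 0) : ∃ c : ℝ, 0 ≤ c ∧ x = c • ξ := by
  obtain ⟨c, rfl⟩ := h.eq_smul x hx h0
  exact ⟨c, hC.nonneg_of_smul_mem h.mem h.ne_zero hx, rfl⟩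

theorem Exposes.strictPos_add (hC : IsProperCone C) {ξ χ g : E} (h : Exposes C ξ χ)
    (hg : g ∈ dualSet C) (hgξ : 0 < ⟪g, ξ⟫) : StrictPos C (χ + g) := by
  intro x hx hx0
  rw [inner_add_left]
  rcases (h.dual_mem x hx).eq_or_lt with h1 | h1
  · obtain ⟨c, hc, rfl⟩ := h.exists_nonneg hC hx h1.symm
    have hc' : 0 < c := hc.lt_of_ne (by rintro rfl; simp at hx0)
    rw [← h1, real_inner_smul_right]
    positivity
  · linarith [hg x hx]

variable [FiniteDimensional ℝ E]

theorem HasSandwich.of_exact (hC : IsProperCone C) {x f : Fin 4 → E} (hx : ∀ i, x i ∈ C)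
    (hf : ∀ i, f i ∈ dualSet C) (rel : x 0 + x 2 = x 1 + x 3) (dual_rel : f 0 + f 2 = f 1 + f 3)
    (h12 : StrictPos C (f 1 + f 2)) (h23 : StrictPos C (f 2 + f 3))
    (diag : ∀ i, ⟪f i, x i⟫ = 0) (h02 : 0 < ⟪f 0, x 2⟫) : HasSandwich C := by
  obtain ⟨δ₁, hδ₁, h1⟩ := hC.exists_sub_smul_mem h12 (f 0 + f 2)
  obtain ⟨δ₂, hδ₂, h2⟩ := hC.exists_sub_smul_mem h23 (f 0 + f 2)
  set δ := min (min δ₁ δ₂) (1 / 2) with hδ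
  have hz : f 0 + f 2 ∈ dualSet C := dualSet_add (hf 0) (hf 2)
  set c := ⟪f 0, x 2⟫⁻¹ with hc
  have hc0 : 0 < c := by positivity
  have e1 : δ ≤ δ₁ := (min_le_left _ _).trans (min_le_left _ _)
  have e2 : δ ≤ δ₂ := (min_le_left _ _).trans (min_le_right _ _)
  refine ⟨δ, ⟪c • (f 0) + c • (f 2), x 0 + x 2⟫, by positivity, min_le_right _ _,
    fun ε hε => ⟨x, fun i => c • f i, hx, fun i => dualSet_smul hc0.le (hf i), rel, ?_, ?_, ?_,
      fun i => ?_, ?_, le_rfl⟩⟩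
  · rw [← smul_add, dual_rel, smul_add]
  · have := dualSet_smul hc0.le (dualSet_add h1 (dualSet_smul (sub_nonneg.2 e1) hz))
    convert this using 1
    module
  · have := dualSet_smul hc0.le (dualSet_add h2 (dualSet_smul (sub_nonneg.2 e2) hz))
    convert this using 1
    module
  · rw [real_inner_smul_left, diag, mul_zero]
    exact hε.le
  · rw [real_inner_smul_left, hc, inv_mul_cancel₀ h02.ne']

/-- In the absence of sandwiches, the duality pairing is dominated by an explicit rank two form
built from an exposed ray `ξ` and a complementary pair `φ`, `η`. -/
theorem inner_le_of_not_hasSandwich (hC : IsProperCone C) (hns : ¬ HasSandwich C) {ξ χ φ η : E}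
    (hexp : Exposes C ξ χ) (hφ : φ ∈ dualSet C) (hη : η ∈ C) (hφη : ⟪φ, η⟫ = 0)
    (hφξ : ⟪φ, ξ⟫ = 1) (hpos : ∀ f ∈ dualSet C, f ≠ 0 → 0 < ⟪f, η⟫ + ⟪f, ξ⟫)
    {M₀ : ℝ} (hM₀ : 0 ≤ M₀)
    (hM : ∀ f ∈ dualSet C, ⟪f, ξ⟫ = 0 → ∀ x ∈ C, ⟪f, x⟫ ≤ M₀ * ⟪f, η⟫ * ⟪χ, x⟫) :
    ∀ x ∈ C, ∀ f ∈ dualSet C, ⟪f, x⟫ ≤ ⟪f, ξ⟫ * ⟪φ, x⟫ + M₀ * ⟪f, η⟫ * ⟪χ, x⟫ := by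
  have step : ∀ t : ℝ, 0 < t → ∀ x ∈ C, ∀ f ∈ dualSet C,
      ⟪f, x⟫ - ⟪f, ξ⟫ * ⟪φ, x⟫ ≤ M₀ * ⟪f, η + t • ξ⟫ * ⟪χ + t • φ, x⟫ := by
    intro t ht
    set p := η + t • ξ with hp
    set z := χ + t • φ with hz
    have hzpos : StrictPos C z := hexp.strictPos_add hC (dualSet_smul ht.le hφ) (by
      rw [real_inner_smul_left, hφξ]; linarith)
    have hppos : StrictPos (dualSet C) p := by
      intro f hf hf0
      rw [real_inner_comm, hp, inner_add_right, real_inner_smul_right]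
      have h1 := hpos f hf hf0
      have h2 := hf η hη
      have h3 := hf ξ hexp.mem
      rcases h2.eq_or_lt with h | h
      · have : 0 < ⟪f, ξ⟫ := by linarith
        rw [← h]; positivity
      · positivity
    by_contra! hcon
    obtain ⟨x', hx', f', hf', hlt⟩ := hcon
    have hx'0 : x' ≠ 0 := by rintro rfl; simp at hlt
    have hf'0 : f' ≠ 0 := by rintro rfl; simp at hlt
    obtain ⟨⟨x, f⟩, ⟨⟨hx, hzx⟩, ⟨hf, hpf⟩⟩, hmax⟩ :=
      ((hC.isCompact_base hzpos).prod (hC.dual.isCompact_base hppos)).exists_isMaxOn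
        ⟨(⟪z, x'⟫⁻¹ • x', ⟪p, f'⟫⁻¹ • f'), hC.smul_base hzpos hx' hx'0,
          hC.dual.smul_base hppos hf' hf'0⟩
        (f := fun q : E × E => ⟪q.2, q.1⟫ - ⟪q.2, ξ⟫ * ⟪φ, q.1⟫) (by fun_prop)
    simp only at hx hzx hf hpf
    set M := ⟪f, x⟫ - ⟪f, ξ⟫ * ⟪φ, x⟫ with hMdef
    have hbound : ∀ y ∈ C, ∀ g ∈ dualSet C,
        ⟪g, y⟫ - ⟪g, ξ⟫ * ⟪φ, y⟫ ≤ M * ⟪g, p⟫ * ⟪z, y⟫ := by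
      intro y hy g hg
      by_cases hy0 : y = 0
      · simp [hy0]
      by_cases hg0 : g = 0
      · simp [hg0]
      have h1 := hzpos y hy hy0
      have h2 := hppos g hg hg0
      have h3 := hmax (a := (⟪z, y⟫⁻¹ • y, ⟪p, g⟫⁻¹ • g))
        ⟨hC.smul_base hzpos hy hy0, hC.dual.smul_base hppos hg hg0⟩
      simp only [Set.mem_ofPred_eq, real_inner_smul_left, real_inner_smul_right] at h3
      have h4 : ⟪z, y⟫⁻¹ * ⟪p, g⟫⁻¹ * (⟪g, y⟫ - ⟪g, ξ⟫ * ⟪φ, y⟫) ≤ M := by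
        refine le_trans (le_of_eq ?_) h3
        ring
      rw [← mul_inv, inv_mul_le_iff₀ (by positivity)] at h4
      rw [real_inner_comm p g]
      linarith
    have hMM : M₀ < M := by
      have h1 := hbound x' hx' f' hf'
      have h2 : 0 < ⟪f', p⟫ * ⟪z, x'⟫ := by
        rw [real_inner_comm]
        exact mul_pos (hppos f' hf' hf'0) (hzpos x' hx' hx'0)
      nlinarith
    have hM0 : 0 < M := hM₀.trans_lt hMM
    have hpf' : ⟪f, p⟫ = 1 := by rw [real_inner_comm, hpf]
    have hφx : 0 ≤ ⟪φ, x⟫ := hφ x hx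
    have hφξ' : 0 ≤ ⟪f, ξ⟫ := hf ξ hexp.mem
    rcases hφξ'.eq_or_lt with hfξ | hfξ
    · have h1 := hM f hf hfξ.symm x hx
      have h2 : ⟪f, η⟫ = 1 := by
        rw [hp, inner_add_right, real_inner_smul_right, ← hfξ] at hpf'
        linarith
      have h3 : ⟪χ, x⟫ ≤ 1 := by
        rw [hz, inner_add_left, real_inner_smul_left] at hzx
        nlinarith
      rw [h2] at h1
      rw [hMdef, ← hfξ] at hMM
      nlinarith
    · refine hns ?_
      have hx1 : M • η + (M * t + ⟪φ, x⟫) • ξ - x ∈ C := hC.bipolar fun g hg => by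
        have h1 := hbound x hx g hg
        rw [hzx, hp] at h1
        simp only [inner_add_right, inner_sub_right, real_inner_smul_right] at h1 ⊢
        linarith
      have hf3 : (M * t + ⟪f, ξ⟫) • φ + M • χ - f ∈ dualSet C := fun y hy => by
        have h1 := hbound y hy f hf
        rw [hpf', hz] at h1
        simp only [inner_add_left, inner_sub_left, real_inner_smul_left] at h1 ⊢
        linarith
      have hp' := hpf'
      have hz' := hzx
      rw [hp, inner_add_right, real_inner_smul_right] at hp'
      rw [hz, inner_add_left, real_inner_smul_left] at hz'
      have hMχ : Exposes C ξ (M • χ) := ⟨hexp.mem, hexp.ne_zero, dualSet_smul hM0.le hexp.dual_mem,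
        by rw [real_inner_smul_left, hexp.inner_eq_zero, mul_zero], fun y hy h => by
          rw [real_inner_smul_left] at h
          exact hexp.eq_smul y hy ((mul_eq_zero.1 h).resolve_left hM0.ne')⟩
      refine HasSandwich.of_exact hC
        (x := ![M • η, M • η + (M * t + ⟪φ, x⟫) • ξ - x, (M * t + ⟪φ, x⟫) • ξ, x])
        (f := ![(M * t + ⟪f, ξ⟫) • φ, f, M • χ, (M * t + ⟪f, ξ⟫) • φ + M • χ - f])
        ?_ ?_ ?_ ?_ ?_ ?_ ?_ ?_
      · have h1 := hC.smul M hM0.le _ hη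
        have h2 := hC.smul (M * t + ⟪φ, x⟫) (by positivity) _ hexp.mem
        simp [Fin.forall_fin_succ, h1, h2, hx1, hx]
      · have h1 := dualSet_smul (c := M * t + ⟪f, ξ⟫) (by positivity) hφ
        have h2 := dualSet_smul hM0.le hexp.dual_mem
        simp [Fin.forall_fin_succ, h1, h2, hf3, hf]
      · simp
      · simp
      · simp only [Matrix.cons_val]
        rw [add_comm]
        exact hMχ.strictPos_add hC hf hfξ
      · simp only [Matrix.cons_val]
        refine hMχ.strictPos_add hC hf3 ?_
        simp only [inner_add_left, inner_sub_left, real_inner_smul_left, hφξ, hexp.inner_eq_zero]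
        have := mul_pos hM0 ht
        linarith
      · have hχ0 := hexp.inner_eq_zero
        intro i
        fin_cases i
        · change ⟪(M * t + ⟪f, ξ⟫) • φ, M • η⟫ = 0
          rw [real_inner_smul_left, real_inner_smul_right, hφη, mul_zero, mul_zero]
        · change ⟪f, M • η + (M * t + ⟪φ, x⟫) • ξ - x⟫ = 0
          simp only [inner_add_right, inner_sub_right, real_inner_smul_right]
          linear_combination M * hp' + hMdef
        · change ⟪M • χ, (M * t + ⟪φ, x⟫) • ξ⟫ = 0
          rw [real_inner_smul_left, real_inner_smul_right, hχ0, mul_zero, mul_zero]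
        · change ⟪(M * t + ⟪f, ξ⟫) • φ + M • χ - f, x⟫ = 0
          simp only [inner_add_left, inner_sub_left, real_inner_smul_left]
          linear_combination M * hz' + hMdef
      · simp only [Matrix.cons_val, real_inner_smul_left, real_inner_smul_right, hφξ]
        positivity
  intro x hx f hf
  have lim : Filter.Tendsto (fun t : ℝ => M₀ * ⟪f, η + t • ξ⟫ * ⟪χ + t • φ, x⟫)
      (nhdsWithin 0 (Set.Ioi 0)) (nhds (M₀ * ⟪f, η + (0 : ℝ) • ξ⟫ * ⟪χ + (0 : ℝ) • φ, x⟫)) := by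
    have : Continuous (fun t : ℝ => M₀ * ⟪f, η + t • ξ⟫ * ⟪χ + t • φ, x⟫) := by fun_prop
    exact this.continuousWithinAt
  have := ge_of_tendsto lim (Filter.eventually_of_mem self_mem_nhdsWithin
    fun t ht => step t ht x hx f hf)
  simp only [zero_smul, add_zero] at this
  linarith

end Exposed

section Rays

variable {E : Type} [NormedAddCommGroup E] [InnerProductSpace ℝ E] {C : Set E}

theorem Simplicial.of_cone (hC : IsProperCone C) {ι : Type} [Fintype ι] [DecidableEq ι]
    {e l : ι → E} (he : ∀ i, e i ∈ C) (hl : ∀ i, l i ∈ dualSet C)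
    (hx : ∀ x ∈ C, x = ∑ i, ⟪l i, x⟫ • e i)
    (hle : ∀ i j, ⟪l i, e j⟫ = if i = j then 1 else 0) : Simplicial C := by
  refine ⟨ι, inferInstance, inferInstance, e, l, he, hl, fun v => ?_, hle⟩
  refine ext_inner_left ℝ fun w => ?_
  have key : w - ∑ i, ⟪w, e i⟫ • l i = 0 := hC.gen _ fun x hxC => by
    rw [inner_sub_left, sum_inner]
    conv_lhs => enter [1]; rw [hx x hxC, inner_sum]
    rw [sub_eq_zero]
    refine Finset.sum_congr rfl fun i _ => ?_
    rw [real_inner_smul_left, real_inner_smul_right, mul_comm]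
  conv_lhs => rw [sub_eq_zero.1 key]
  rw [inner_sum, sum_inner]
  refine Finset.sum_congr rfl fun i _ => ?_
  rw [real_inner_smul_left, real_inner_smul_right, mul_comm]

variable [FiniteDimensional ℝ E]

theorem eq_smul_of_not_hasSandwich (hC : IsProperCone C) (hns : ¬ HasSandwich C) {ξ χ φ η : E}
    (hexp : Exposes C ξ χ) (hφ : φ ∈ dualSet C) (hη : η ∈ C) (hφη : ⟪φ, η⟫ = 0)
    (hφξ : ⟪φ, ξ⟫ = 1) (hpos : ∀ f ∈ dualSet C, f ≠ 0 → 0 < ⟪f, η⟫ + ⟪f, ξ⟫)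
    {M₀ : ℝ} (hM₀ : 0 ≤ M₀)
    (hM : ∀ f ∈ dualSet C, ⟪f, ξ⟫ = 0 → ∀ x ∈ C, ⟪f, x⟫ ≤ M₀ * ⟪f, η⟫ * ⟪χ, x⟫)
    {f : E} (hf : f ∈ dualSet C) (hfη : ⟪f, η⟫ = 0) : f = ⟪f, ξ⟫ • φ := by
  by_cases hf0 : f = 0
  · simp [hf0]
  have hs := hpos f hf hf0
  rw [hfη, zero_add] at hs
  refine sub_eq_zero.1 (hC.gen _ fun x hx => ?_)
  have h1 := inner_le_of_not_hasSandwich hC hns hexp hφ hη hφη hφξ hpos hM₀ hM x hx f hf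
  have h2 := inner_le_of_not_hasSandwich hC hns hexp
    (dualSet_smul (c := ⟪f, ξ⟫⁻¹) (by positivity) hf) hη
    (by rw [real_inner_smul_left, hfη, mul_zero])
    (by rw [real_inner_smul_left, inv_mul_cancel₀ hs.ne']) hpos hM₀ hM x hx φ hφ
  rw [hφη, hφξ, real_inner_smul_left, mul_zero, zero_mul, add_zero, one_mul] at h2
  rw [hfη, mul_zero, zero_mul, add_zero] at h1
  rw [le_inv_mul_iff₀ hs] at h2
  rw [inner_sub_left, real_inner_smul_left]
  linarith

/-- If the functionals vanishing at an exposed ray form a ray, the cone is simplicial. -/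
theorem simplicial_of_dual_ray (hC : IsProperCone C) (hns : ¬ HasSandwich C) {ξ χ : E}
    (hexp : Exposes C ξ χ) (hN : ∀ f ∈ dualSet C, ⟪f, ξ⟫ = 0 → ∃ c : ℝ, f = c • χ) :
    Simplicial C := by
  by_cases hχ : χ = 0
  · have hξξ : ⟪ξ, ξ⟫ ≠ 0 := inner_self_ne_zero.2 hexp.ne_zero
    refine Simplicial.of_cone hC (ι := Unit) (e := fun _ => ξ) (l := fun _ => ⟪ξ, ξ⟫⁻¹ • ξ)
      (fun _ => hexp.mem) (fun _ x hx => ?_) (fun x hx => ?_) (fun _ _ => ?_)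
    · obtain ⟨c, hc, rfl⟩ := hexp.exists_nonneg hC hx (by simp [hχ])
      rw [real_inner_smul_left, real_inner_smul_right, mul_left_comm, inv_mul_cancel₀ hξξ]
      linarith
    · obtain ⟨c, rfl⟩ := hexp.eq_smul x hx (by simp [hχ])
      simp only [Finset.univ_unique, Finset.sum_const, Finset.card_singleton, one_smul]
      rw [real_inner_smul_left, real_inner_smul_right, mul_left_comm, inv_mul_cancel₀ hξξ, mul_one]
    · rw [real_inner_smul_left, inv_mul_cancel₀ hξξ]
      simp
  obtain ⟨p, hp⟩ := hC.dual.exists_strictPos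
  obtain ⟨φ₀, ⟨hφ₀, hpφ⟩, hmax⟩ := (hC.dual.isCompact_base hp).exists_isMaxOn
    ⟨_, hC.dual.smul_base hp hexp.dual_mem hχ⟩ (f := fun f => ⟪f, ξ⟫) (by fun_prop)
  set s := ⟪φ₀, ξ⟫ with hs
  have hle : ∀ f ∈ dualSet C, ⟪f, ξ⟫ ≤ s * ⟪f, p⟫ := by
    intro f hf
    by_cases hf0 : f = 0
    · simp [hf0]
    have h1 := hp f hf hf0
    have h2 := hmax (hC.dual.smul_base hp hf hf0)
    simp only [Set.mem_ofPred_eq, real_inner_smul_left] at h2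
    rw [inv_mul_le_iff₀ h1] at h2
    rw [real_inner_comm p f]
    linarith
  have hpC : p ∈ C := by
    have := hp.mem
    rwa [hC.dual_dual] at this
  have hs0 : 0 < s := by
    by_contra! hs0
    refine hexp.ne_zero (hC.pointed _ hexp.mem (hC.bipolar fun f hf => ?_))
    rw [inner_neg_right]
    nlinarith [hle f hf, hf p hpC]
  set η := p - s⁻¹ • ξ with hη
  have hηC : η ∈ C := hC.bipolar fun f hf => by
    rw [hη, inner_sub_right, real_inner_smul_right, sub_nonneg, inv_mul_le_iff₀ hs0]
    exact hle f hf
  set φ := s⁻¹ • φ₀ with hφdef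
  have hφ : φ ∈ dualSet C := dualSet_smul (by positivity) hφ₀
  have hφξ : ⟪φ, ξ⟫ = 1 := by rw [hφdef, real_inner_smul_left, ← hs, inv_mul_cancel₀ hs0.ne']
  have hφη : ⟪φ, η⟫ = 0 := by
    rw [hη, inner_sub_right, real_inner_smul_right, hφξ, hφdef, real_inner_smul_left,
      real_inner_comm, hpφ, sub_self]
  have hfp : ∀ f, ⟪f, p⟫ = ⟪f, η⟫ + s⁻¹ * ⟪f, ξ⟫ := fun f => by
    rw [hη, inner_sub_right, real_inner_smul_right]
    ring
  have hpos : ∀ f ∈ dualSet C, f ≠ 0 → 0 < ⟪f, η⟫ + ⟪f, ξ⟫ := by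
    intro f hf hf0
    have h1 := hf η hηC
    have h2 := hf ξ hexp.mem
    by_contra! hcon
    have h3 := hp f hf hf0
    rw [real_inner_comm, hfp, show ⟪f, η⟫ = 0 by linarith, show ⟪f, ξ⟫ = 0 by linarith] at h3
    simp at h3
  have hχη : 0 < ⟪χ, η⟫ := by
    have := hpos χ hexp.dual_mem hχ
    rwa [hexp.inner_eq_zero, add_zero] at this
  have key := inner_le_of_not_hasSandwich hC hns hexp hφ hηC hφη hφξ hpos
    (M₀ := ⟪χ, η⟫⁻¹) (by positivity) (fun f hf hfξ x hx => by
      obtain ⟨c, rfl⟩ := hN f hf hfξ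
      rw [real_inner_smul_left, real_inner_smul_left]
      refine le_of_eq ?_
      field_simp)
  have hdec : ∀ x ∈ C, x = ⟪φ, x⟫ • ξ + (⟪χ, η⟫⁻¹ * ⟪χ, x⟫) • η := by
    intro x hx
    have hy : ⟪φ, x⟫ • ξ + (⟪χ, η⟫⁻¹ * ⟪χ, x⟫) • η - x ∈ C := hC.bipolar fun f hf => by
      have := key x hx f hf
      simp only [inner_add_right, inner_sub_right, real_inner_smul_right]
      linarith
    obtain ⟨c, hc⟩ := hexp.eq_smul _ hy (by
      simp only [inner_add_right, inner_sub_right, real_inner_smul_right, hexp.inner_eq_zero]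
      field_simp
      ring)
    have hc0 := congrArg (fun v => ⟪φ, v⟫) hc
    simp only [inner_add_right, inner_sub_right, real_inner_smul_right, hφξ, hφη] at hc0
    have : c = 0 := by linarith
    rw [this, zero_smul] at hc
    exact (sub_eq_zero.1 hc).symm
  refine Simplicial.of_cone hC (ι := Fin 2) (e := ![ξ, η]) (l := ![φ, ⟪χ, η⟫⁻¹ • χ]) ?_ ?_ ?_ ?_
  · simp [Fin.forall_fin_succ, hexp.mem, hηC]
  · have := dualSet_smul (c := ⟪χ, η⟫⁻¹) (by positivity) hexp.dual_mem
    simp [Fin.forall_fin_succ, hφ, this]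
  · intro x hx
    simpa [Fin.sum_univ_two, real_inner_smul_left] using hdec x hx
  · simp [Fin.forall_fin_succ, real_inner_smul_left, hφξ, hφη, hexp.inner_eq_zero, hχη.ne']

/-- If the functionals vanishing at the exposed ray `ξ₁` form a cone generated by a finite family
`g`, then every other exposed ray is killed by some member of `g`. -/
theorem exists_inner_eq_zero (hC : IsProperCone C) (hns : ¬ HasSandwich C)
    (hsimp : ¬ Simplicial C) {ξ₁ χ₁ ξ₂ χ₂ : E} (h₁ : Exposes C ξ₁ χ₁) (h₂ : Exposes C ξ₂ χ₂)
    {ι : Type} [Fintype ι] {g : ι → E} (hg : ∀ i, g i ∈ dualSet C) (hgξ : ∀ i, ⟪g i, ξ₁⟫ = 0)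
    (hgen : ∀ f ∈ dualSet C, ⟪f, ξ₁⟫ = 0 → ∃ c : ι → ℝ, (∀ i, 0 ≤ c i) ∧ f = ∑ i, c i • g i) :
    ∃ i, ⟪g i, ξ₂⟫ = 0 := by
  by_contra! hcon
  have hgpos : ∀ i, 0 < ⟪g i, ξ₂⟫ := fun i => (hg i _ h₂.mem).lt_of_ne' (hcon i)
  rcases isEmpty_or_nonempty ι with hι | hι
  · refine hsimp (simplicial_of_dual_ray hC hns h₁ fun f hf hf0 => ⟨0, ?_⟩)
    obtain ⟨c, -, hc⟩ := hgen f hf hf0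
    simpa using hc
  set χ := ∑ i, g i with hχ
  have hχD : χ ∈ dualSet C := dualSet_sum _ _ fun i _ => hg i
  have hgχ : ∀ x ∈ C, ∀ i, ⟪g i, x⟫ ≤ ⟪χ, x⟫ := fun x hx i => by
    rw [hχ, sum_inner]
    exact Finset.single_le_sum (f := fun i => ⟪g i, x⟫) (fun i _ => hg i x hx) (Finset.mem_univ i)
  have hexp : Exposes C ξ₁ χ := by
    refine ⟨h₁.mem, h₁.ne_zero, hχD, by rw [hχ, sum_inner]; simp [hgξ], fun x hx hx0 => ?_⟩
    refine h₁.eq_smul x hx ?_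
    obtain ⟨c, -, hc⟩ := hgen χ₁ h₁.dual_mem h₁.inner_eq_zero
    rw [hc, sum_inner]
    refine Finset.sum_eq_zero fun i _ => ?_
    rw [real_inner_smul_left, le_antisymm ((hgχ x hx i).trans hx0.le) (hg i x hx), mul_zero]
  have hχξ : 0 < ⟪χ₂, ξ₁⟫ := by
    refine (h₂.dual_mem _ h₁.mem).lt_of_ne' fun h0 => ?_
    obtain ⟨c, hc⟩ := h₂.eq_smul _ h₁.mem h0
    have i := hι.some
    have h1 := hgξ i
    rw [hc, real_inner_smul_right] at h1
    rcases mul_eq_zero.1 h1 with h | h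
    · exact h₁.ne_zero (by rw [hc, h, zero_smul])
    · exact hcon i h
  obtain ⟨i₀, hi₀⟩ := Finite.exists_min fun i => ⟪g i, ξ₂⟫
  have hsum : ∀ c : ι → ℝ, (∀ i, 0 ≤ c i) →
      (∑ i, c i) * ⟪g i₀, ξ₂⟫ ≤ ⟪∑ i, c i • g i, ξ₂⟫ := fun c hc => by
    rw [Finset.sum_mul, sum_inner]
    refine Finset.sum_le_sum fun i _ => ?_
    rw [real_inner_smul_left]
    exact mul_le_mul_of_nonneg_left (hi₀ i) (hc i)
  have hpos : ∀ f ∈ dualSet C, f ≠ 0 → 0 < ⟪f, ξ₂⟫ + ⟪f, ξ₁⟫ := by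
    intro f hf hf0
    have p1 := hf _ h₁.mem
    have p2 := hf _ h₂.mem
    by_contra! hle
    obtain ⟨c, hc, rfl⟩ := hgen f hf (by linarith)
    have h3 := hsum c hc
    have h4 : ∑ i, c i = 0 := by
      have h5 : 0 ≤ ∑ i, c i := Finset.sum_nonneg fun i _ => hc i
      nlinarith [hgpos i₀]
    rw [Finset.sum_eq_zero_iff_of_nonneg fun i _ => hc i] at h4
    exact hf0 (Finset.sum_eq_zero fun i hi => by rw [h4 i hi, zero_smul])
  refine hsimp (simplicial_of_dual_ray hC hns h₂ fun f hf hf0 => ?_)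
  have := eq_smul_of_not_hasSandwich hC hns hexp
    (dualSet_smul (c := ⟪χ₂, ξ₁⟫⁻¹) (by positivity) h₂.dual_mem) h₂.mem
    (by rw [real_inner_smul_left, h₂.inner_eq_zero, mul_zero])
    (by rw [real_inner_smul_left, inv_mul_cancel₀ hχξ.ne']) hpos (M₀ := ⟪g i₀, ξ₂⟫⁻¹)
    (inv_nonneg.2 (hgpos i₀).le) (fun f hf hfξ x hx => by
      obtain ⟨c, hc, rfl⟩ := hgen f hf hfξ
      have h3 := hsum c hc
      rw [mul_assoc, le_inv_mul_iff₀ (hgpos i₀)]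
      have h4 : ⟪∑ i, c i • g i, x⟫ ≤ (∑ i, c i) * ⟪χ, x⟫ := by
        rw [sum_inner, Finset.sum_mul]
        refine Finset.sum_le_sum fun i _ => ?_
        rw [real_inner_smul_left]
        exact mul_le_mul_of_nonneg_left (hgχ x hx i) (hc i)
      have h5 := mul_le_mul_of_nonneg_left h4 (hgpos i₀).le
      have h6 := mul_le_mul_of_nonneg_right h3 (hχD x hx)
      linarith) hf hf0
  exact ⟨_, by rw [smul_smul] at this; exact this⟩

/-- A functional that is nonnegative on all exposed rays belongs to the dual cone. -/
theorem mem_dualSet_of_exposed (hC : IsProperCone C) {l : E}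
    (hl : ∀ ζ χ, Exposes C ζ χ → 0 ≤ ⟪l, ζ⟫) : l ∈ dualSet C := by
  obtain ⟨u, hu⟩ := hC.exists_strictPos
  by_contra hcon
  obtain ⟨q', hq', hlq'⟩ : ∃ q ∈ C, ⟪l, q⟫ < 0 := by simpa [mem_dualSet] using hcon
  have hq'0 : q' ≠ 0 := by rintro rfl; simp at hlq'
  obtain ⟨q, hq, hlq⟩ : ∃ q ∈ {x ∈ C | ⟪u, x⟫ = 1}, ⟪l, q⟫ < 0 := by
    refine ⟨_, hC.smul_base hu hq' hq'0, ?_⟩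
    rw [real_inner_smul_right]
    exact mul_neg_of_pos_of_neg (inv_pos.2 (hu _ hq' hq'0)) hlq'
  have hcomp := hC.isCompact_base hu
  obtain ⟨b, -, hb⟩ := hcomp.exists_isMaxOn ⟨q, hq⟩ (f := fun v => ⟪v, v⟫) (by fun_prop)
  set t := (⟪b, b⟫ + 1) / (-⟪l, q⟫) with ht
  have hb0 : 0 ≤ ⟪b, b⟫ := real_inner_self_nonneg
  have ht0 : 0 < t := div_pos (by linarith) (by linarith)
  have htq : t * (-⟪l, q⟫) = ⟪b, b⟫ + 1 := div_mul_cancel₀ _ (by linarith)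
  obtain ⟨v, ⟨hvC, huv⟩, hmax⟩ := hcomp.exists_isMaxOn ⟨q, hq⟩
    (f := fun v => ⟪v, v⟫ - t * ⟪l, v⟫) (by fun_prop)
  have hlv : ⟪l, v⟫ < 0 := by
    by_contra! hlv
    have h1 := hmax hq
    have h2 := hb ⟨hvC, huv⟩
    simp only [Set.mem_ofPred_eq] at h1 h2
    have h3 : 0 ≤ ⟪q, q⟫ := real_inner_self_nonneg
    have h4 := mul_nonneg ht0.le hlv
    linarith
  have hform : ∀ w, ⟪u, w⟫ = 1 →
      ⟪(2 * ⟪v, v⟫ - t * ⟪l, v⟫) • u - (2 : ℝ) • v + t • l, w⟫ =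
        (⟪v, v⟫ - t * ⟪l, v⟫ - (⟪w, w⟫ - t * ⟪l, w⟫)) + ⟪w - v, w - v⟫ := fun w hw => by
    simp only [inner_add_left, inner_sub_left, real_inner_smul_left, inner_sub_right, hw,
      real_inner_comm v w]
    ring
  have hbase : ∀ w ∈ {x ∈ C | ⟪u, x⟫ = 1},
      ⟪w - v, w - v⟫ ≤ ⟪(2 * ⟪v, v⟫ - t * ⟪l, v⟫) • u - (2 : ℝ) • v + t • l, w⟫ := fun w hw => by
    have := hmax hw
    simp only [Set.mem_ofPred_eq] at this
    rw [hform w hw.2]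
    linarith
  refine (hl v ((2 * ⟪v, v⟫ - t * ⟪l, v⟫) • u - (2 : ℝ) • v + t • l)
    ⟨hvC, ?_, fun x hx => ?_, ?_, fun x hx hx0 => ?_⟩).not_gt hlv
  · rintro rfl
    simp at huv
  · by_cases h0 : x = 0
    · simp [h0]
    have h1 := (real_inner_self_nonneg).trans (hbase _ (hC.smul_base hu hx h0))
    rw [real_inner_smul_right] at h1
    exact nonneg_of_mul_nonneg_right h1 (inv_pos.2 (hu x hx h0))
  · rw [hform v huv]
    simp
  · by_cases h0 : x = 0
    · exact ⟨0, by simp [h0]⟩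
    have h1 := hbase _ (hC.smul_base hu hx h0)
    rw [real_inner_smul_right _ x, hx0, mul_zero] at h1
    have h2 := inner_self_eq_zero.1 (le_antisymm h1 real_inner_self_nonneg)
    refine ⟨⟪u, x⟫, ?_⟩
    rw [← sub_eq_zero.1 h2, smul_smul, mul_inv_cancel₀ (hu x hx h0).ne', one_smul]

end Rays

section Induction

theorem exists_mul_add_nonneg {α : Type*} {T : Set α} (hT : T.Finite) {a b : α → ℝ}
    (ha : ∀ t ∈ T, 0 ≤ a t) (hb : ∀ t ∈ T, a t = 0 → 0 ≤ b t) :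
    ∃ K : ℝ, 0 ≤ K ∧ ∀ t ∈ T, 0 ≤ K * a t + b t := by
  induction T, hT using Set.Finite.induction_on with
  | empty => exact ⟨0, le_rfl, by simp⟩
  | @insert t T _ _ ih =>
    obtain ⟨K, hK, h⟩ := ih (fun s hs => ha s (Set.mem_insert_of_mem _ hs))
      (fun s hs => hb s (Set.mem_insert_of_mem _ hs))
    have hat := ha t (Set.mem_insert _ _)
    obtain ⟨K', hK', h'⟩ : ∃ K' : ℝ, 0 ≤ K' ∧ 0 ≤ K' * a t + b t := by
      rcases hat.eq_or_lt with h0 | h0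
      · exact ⟨0, le_rfl, by simpa using hb t (Set.mem_insert _ _) h0.symm⟩
      · refine ⟨|b t| / a t, by positivity, ?_⟩
        rw [div_mul_cancel₀ _ h0.ne']
        linarith [neg_abs_le (b t)]
    refine ⟨K + K', add_nonneg hK hK', fun s hs => ?_⟩
    rcases Set.mem_insert_iff.1 hs with rfl | hs'
    · nlinarith
    · have := ha s hs
      nlinarith [h s hs']

variable {E : Type} [NormedAddCommGroup E] [InnerProductSpace ℝ E] {C : Set E}

theorem Exposes.smul (hC : IsProperCone C) {ξ χ : E} (h : Exposes C ξ χ) {c : ℝ} (hc : 0 < c) :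
    Exposes C (c • ξ) χ where
  mem := hC.smul _ hc.le _ h.mem
  ne_zero := smul_ne_zero hc.ne' h.ne_zero
  dual_mem := h.dual_mem
  inner_eq_zero := by rw [real_inner_smul_right, h.inner_eq_zero, mul_zero]
  eq_smul := fun x hx h0 => by
    obtain ⟨d, rfl⟩ := h.eq_smul x hx h0
    exact ⟨d * c⁻¹, by rw [smul_smul, inv_mul_cancel_right₀ hc.ne']⟩

/-- An exposed ray lying in a finitely generated face is spanned by one of the generators. -/
theorem Exposes.exists_eq_smul (hC : IsProperCone C) {ξ χ : E} (h : Exposes C ξ χ) {ι : Type}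
    [Fintype ι] {e : ι → E} (he : ∀ i, e i ∈ C) (he0 : ∀ i, e i ≠ 0) {c : ι → ℝ}
    (hc : ∀ i, 0 ≤ c i) (hξ : ξ = ∑ i, c i • e i) : ∃ i, ∃ a : ℝ, 0 < a ∧ ξ = a • e i := by
  have h1 : ∑ i, c i * ⟪χ, e i⟫ = 0 := by
    rw [← h.inner_eq_zero, hξ, inner_sum]
    exact Finset.sum_congr rfl fun i _ => (real_inner_smul_right _ _ _).symm
  rw [Finset.sum_eq_zero_iff_of_nonneg
    fun i _ => mul_nonneg (hc i) (h.dual_mem _ (he i))] at h1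
  obtain ⟨i, hi⟩ : ∃ i, c i ≠ 0 := by
    by_contra! hcon
    exact h.ne_zero (by rw [hξ]; simp [hcon])
  obtain ⟨a, ha, hae⟩ := h.exists_nonneg hC (he i)
    ((mul_eq_zero.1 (h1 i (Finset.mem_univ i))).resolve_left hi)
  have ha' : 0 < a := ha.lt_of_ne (by rintro rfl; exact he0 i (by simp [hae]))
  exact ⟨i, a⁻¹, inv_pos.2 ha', by rw [hae, smul_smul, inv_mul_cancel₀ ha'.ne', one_smul]⟩

variable [FiniteDimensional ℝ E]

theorem exists_exposes (hC : IsProperCone C) (hsimp : ¬ Simplicial C) :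
    ∃ ξ χ, Exposes C ξ χ := by
  by_contra! hcon
  have h0 : ∀ l : E, l = 0 := fun l =>
    hC.dual.pointed l (mem_dualSet_of_exposed hC fun ζ χ h => (hcon ζ χ h).elim)
      (mem_dualSet_of_exposed hC fun ζ χ h => (hcon ζ χ h).elim)
  exact hsimp (Simplicial.of_cone hC (ι := Empty) (e := Empty.elim) (l := Empty.elim)
    (by simp) (by simp) (fun x _ => by simpa using h0 x) (by simp))

theorem false_of_simplicialFaces (hC : IsProperCone C) (hns : ¬ HasSandwich C)
    (hsimp : ¬ Simplicial C) (hface : ∀ h ∈ dualSet C, h ≠ 0 → SimplicialFace C h)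
    (hdual : ∀ ξ ∈ C, ξ ≠ 0 → SimplicialFace (dualSet C) ξ) : False := by
  classical
  obtain ⟨ξ, χ, hξ⟩ := exists_exposes hC hsimp
  obtain ⟨ι, _, g, hg, hgi, hgen⟩ := hdual ξ hξ.mem hξ.ne_zero
  replace hgen : ∀ f ∈ dualSet C, ⟪f, ξ⟫ = 0 → ∃ c : ι → ℝ, (∀ i, 0 ≤ c i) ∧ f = ∑ i, c i • g i :=
    fun f hf h0 => hgen f hf (by rw [real_inner_comm, h0])
  have hgD : ∀ i, g i ∈ dualSet C := fun i => (hg i).1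
  have hgξ : ∀ i, ⟪g i, ξ⟫ = 0 := fun i => by rw [real_inner_comm, (hg i).2]
  have hkill : ∀ ζ χ', Exposes C ζ χ' → ∃ i, ⟪g i, ζ⟫ = 0 := fun ζ χ' hζ =>
    exists_inner_eq_zero hC hns hsimp hξ hζ hgD hgξ hgen
  choose κ hκ e he hei hegen using fun i => hface (g i) (hgD i) (hgi.ne_zero i)
  have hray : ∀ ζ χ', Exposes C ζ χ' → ∀ i, ⟪g i, ζ⟫ = 0 → ∃ k, ∃ a : ℝ, 0 < a ∧ ζ = a • e i k := by
    intro ζ χ' hζ i hi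
    obtain ⟨c, hc, hsum⟩ := hegen i ζ hζ.mem hi
    exact hζ.exists_eq_smul hC (fun k => (he i k).1) (hei i).ne_zero hc hsum
  have hlift : ∀ a ∈ dualSet C, ∀ b : E, (∀ ζ χ', Exposes C ζ χ' → ⟪a, ζ⟫ = 0 → 0 ≤ ⟪b, ζ⟫) →
      ∃ K : ℝ, 0 ≤ K ∧ K • a + b ∈ dualSet C := by
    intro a ha b hb
    set T : Set E := {t | (∃ χ', Exposes C t χ') ∧ t ∈ Set.range fun p : Σ i, κ i => e p.1 p.2}
    have hT : T.Finite := (Set.finite_range _).subset fun t ht => ht.2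
    obtain ⟨K, hK, h⟩ := exists_mul_add_nonneg hT (a := fun t => ⟪a, t⟫) (b := fun t => ⟪b, t⟫)
      (fun t ht => ha t (ht.1.choose_spec.mem)) (fun t ht h0 => hb t _ ht.1.choose_spec h0)
    refine ⟨K, hK, mem_dualSet_of_exposed hC fun ζ χ' hζ => ?_⟩
    obtain ⟨i, hi⟩ := hkill ζ χ' hζ
    obtain ⟨k, c, hc, rfl⟩ := hray ζ χ' hζ i hi
    have hek : e i k ∈ T := by
      refine ⟨⟨χ', ?_⟩, ⟨⟨i, k⟩, rfl⟩⟩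
      have := hζ.smul hC (inv_pos.2 hc)
      rwa [smul_smul, inv_mul_cancel₀ hc.ne', one_smul] at this
    have h1 := h _ hek
    rw [inner_add_left, real_inner_smul_left, real_inner_smul_right, real_inner_smul_right]
    nlinarith
  have hvert : ∀ j, ∃ x χ', Exposes C x χ' ∧ (∀ i, i ≠ j → ⟪g i, x⟫ = 0) ∧ ⟪g j, x⟫ = 1 := by
    intro j
    obtain ⟨x, χ', hx, h0, hpos⟩ : ∃ x χ', Exposes C x χ' ∧ (∀ i, i ≠ j → ⟪g i, x⟫ = 0) ∧
        0 < ⟪g j, x⟫ := by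
      by_contra! hcon
      obtain ⟨K, hK, hD⟩ := hlift (∑ i ∈ Finset.univ.erase j, g i)
        (dualSet_sum _ _ fun i _ => hgD i) (-g j) (fun ζ χ' hζ h0 => by
          rw [sum_inner, Finset.sum_eq_zero_iff_of_nonneg fun i _ => hgD i _ hζ.mem] at h0
          rw [inner_neg_left]
          have := hcon ζ χ' hζ fun i hi => h0 i (by simp [hi])
          linarith)
      obtain ⟨c, hc, hsum⟩ := hgen _ hD (by
        rw [inner_add_left, real_inner_smul_left, sum_inner, inner_neg_left]
        simp [hgξ])
      have h1 : ∑ i, (c i - if i = j then -1 else K) • g i = 0 := by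
        simp only [sub_smul, Finset.sum_sub_distrib]
        rw [← hsum, ← Finset.add_sum_erase _ _ (Finset.mem_univ j), Finset.smul_sum,
          Finset.sum_congr (f := fun i => (if i = j then -1 else K) • g i) rfl
            (fun i hi => by rw [if_neg (Finset.ne_of_mem_erase hi)])]
        simp only [if_true]
        module
      have h2 := Fintype.linearIndependent_iff.1 hgi _ h1 j
      simp only [if_true] at h2
      linarith [hc j]
    refine ⟨_, χ', hx.smul hC (inv_pos.2 hpos), fun i hi => ?_, ?_⟩
    · rw [real_inner_smul_right, h0 i hi, mul_zero]
    · rw [real_inner_smul_right, inv_mul_cancel₀ hpos.ne']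
  choose x χx hx hx0 hx1 using hvert
  have hgx : ∀ i j, ⟪g i, x j⟫ = if i = j then 1 else 0 := by
    intro i j
    split_ifs with h
    · rw [h, hx1]
    · exact hx0 j i h
  have hξξ : ⟪ξ, ξ⟫ ≠ 0 := inner_self_ne_zero.2 hξ.ne_zero
  have hker : ∀ v, (∀ i, ⟪g i, v⟫ = 0) → ∃ c : ℝ, v = c • ξ := by
    intro v hv
    set w := v - (⟪ξ, v⟫ / ⟪ξ, ξ⟫) • ξ with hw
    have hwξ : ⟪w, ξ⟫ = 0 := by
      rw [hw, inner_sub_left, real_inner_smul_left, div_mul_cancel₀ _ hξξ, real_inner_comm, sub_self]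
    have hgv : ∀ c : ι → ℝ, ⟪∑ i, c i • g i, v⟫ = 0 := fun c => by
      rw [sum_inner]
      exact Finset.sum_eq_zero fun i _ => by rw [real_inner_smul_left, hv, mul_zero]
    obtain ⟨K, -, hD⟩ := hlift χ hξ.dual_mem w (fun ζ χ' hζ h0 => by
      obtain ⟨c, rfl⟩ := hξ.eq_smul ζ hζ.mem h0
      rw [real_inner_smul_right, hwξ, mul_zero])
    obtain ⟨c, -, hc⟩ := hgen _ hD (by
      rw [inner_add_left, real_inner_smul_left, hξ.inner_eq_zero, hwξ, mul_zero, add_zero])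
    obtain ⟨c', -, hc'⟩ := hgen _ hξ.dual_mem hξ.inner_eq_zero
    have h1 : ⟪w, v⟫ = 0 := by
      have h2 := hgv c
      rw [← hc, inner_add_left, real_inner_smul_left, hc', hgv, mul_zero, zero_add] at h2
      exact h2
    have h3 : ⟪w, w⟫ = 0 := by
      nth_rewrite 2 [hw]
      rw [inner_sub_right, real_inner_smul_right, h1, hwξ, mul_zero, sub_zero]
    exact ⟨_, sub_eq_zero.1 (inner_self_eq_zero.1 h3)⟩
  have hdecomp : ∀ v, ∃ a : ℝ, v = a • ξ + ∑ j, ⟪g j, v⟫ • x j := by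
    intro v
    obtain ⟨a, ha⟩ := hker (v - ∑ j, ⟪g j, v⟫ • x j) fun i => by
      rw [inner_sub_right, inner_sum]
      simp [real_inner_smul_right, hgx]
    exact ⟨a, by rw [← ha, sub_add_cancel]⟩
  have hclass : ∀ ζ χ', Exposes C ζ χ' → (∃ c : ℝ, 0 < c ∧ ζ = c • ξ) ∨
      ∃ j, ∃ c : ℝ, 0 < c ∧ ζ = c • x j := by
    intro ζ χ' hζ
    obtain ⟨i, hi⟩ := hkill ζ χ' hζ
    obtain ⟨k, c, hc, hζk⟩ := hray ζ χ' hζ i hi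
    obtain ⟨k₀, c₀, hc₀, hξk⟩ := hray ξ χ hξ i (hgξ i)
    by_cases hk₀ : k₀ = k
    · exact Or.inl ⟨c * c₀⁻¹, by positivity, by
        rw [hζk, hξk, hk₀, smul_smul, inv_mul_cancel_right₀ hc₀.ne']⟩
    by_cases hj : ∃ j, j ≠ i ∧ ∃ a : ℝ, 0 < a ∧ x j = a • e i k
    · obtain ⟨j, -, a, ha, hxj⟩ := hj
      exact Or.inr ⟨j, c * a⁻¹, by positivity, by
        rw [hζk, hxj, smul_smul, inv_mul_cancel_right₀ ha.ne']⟩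
    exfalso
    set S := Submodule.span ℝ (e i '' {k}ᶜ) with hS
    have hmem : ζ ∈ S := by
      obtain ⟨a, ha⟩ := hdecomp ζ
      rw [ha]
      refine S.add_mem (S.smul_mem _ ?_) (S.sum_mem fun j _ => ?_)
      · rw [hξk]
        exact S.smul_mem _ (Submodule.subset_span ⟨k₀, hk₀, rfl⟩)
      · by_cases hji : j = i
        · rw [hji, hi, zero_smul]
          exact S.zero_mem
        · obtain ⟨k', a', ha', hxk⟩ := hray (x j) (χx j) (hx j) i (hx0 j i (Ne.symm hji))
          refine S.smul_mem _ ?_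
          rw [hxk]
          refine S.smul_mem _ (Submodule.subset_span ⟨k', ?_, rfl⟩)
          rintro rfl
          exact hj ⟨j, hji, a', ha', hxk⟩
    refine (hei i).notMem_span_image (s := {k}ᶜ) (x := k) (by simp) ?_
    have := S.smul_mem c⁻¹ hmem
    rwa [hζk, smul_smul, inv_mul_cancel₀ hc.ne', one_smul] at this
  set m := ⟪ξ, ξ⟫⁻¹ • ξ with hm
  set l := m - ∑ j, ⟪m, x j⟫ • g j with hl
  have hlξ : ⟪l, ξ⟫ = 1 := by
    rw [hl, inner_sub_left, sum_inner, hm, real_inner_smul_left, inv_mul_cancel₀ hξξ]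
    simp [real_inner_smul_left, hgξ]
  have hlx : ∀ j, ⟪l, x j⟫ = 0 := fun j => by
    rw [hl, inner_sub_left, sum_inner]
    simp [real_inner_smul_left, hgx]
  have hlD : l ∈ dualSet C := mem_dualSet_of_exposed hC fun ζ χ' hζ => by
    rcases hclass ζ χ' hζ with ⟨c, hc, rfl⟩ | ⟨j, c, hc, rfl⟩
    · rw [real_inner_smul_right, hlξ]
      positivity
    · rw [real_inner_smul_right, hlx, mul_zero]
  refine hsimp (Simplicial.of_cone hC (ι := Option ι) (e := fun o => o.elim ξ x)
    (l := fun o => o.elim l g) ?_ ?_ ?_ ?_)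
  · rintro (_ | j)
    exacts [hξ.mem, (hx j).mem]
  · rintro (_ | j)
    exacts [hlD, hgD j]
  · intro v _
    obtain ⟨a, ha⟩ := hdecomp v
    have hla : ⟪l, v⟫ = a := by
      conv_lhs => rw [ha]
      rw [inner_add_right, inner_sum, real_inner_smul_right, hlξ]
      simp [real_inner_smul_right, hlx]
    rw [Fintype.sum_option]
    simp only [Option.elim, hla]
    exact ha
  · rintro (_ | i) (_ | j)
    · simpa using hlξ
    · simpa using hlx j
    · simpa using hgξ i
    · simpa using hgx i j

/-- Every non-simplicial proper cone has a sandwich. -/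
theorem IsProperCone.simplicial_or_hasSandwich (n : ℕ) : ∀ {E : Type} [NormedAddCommGroup E]
    [InnerProductSpace ℝ E] [FiniteDimensional ℝ E] {C : Set E}, Module.finrank ℝ E = n →
    IsProperCone C → Simplicial C ∨ HasSandwich C := by
  induction n using Nat.strong_induction_on with
  | _ n ih =>
    intro E _ _ _ C hn hC
    by_contra! hcon
    refine false_of_simplicialFaces hC hcon.2 hcon.1 (fun h hh h0 => ?_) (fun ξ hξ h0 => ?_)
    · rcases ih _ (hn ▸ finrank_faceSpan_lt (C := C) h0) rfl hC.face with H | H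
      · exact H.simplicialFace
      · exact (hcon.2 (H.of_face hC hh)).elim
    · have hF := hC.dual.face (h := ξ)
      rcases ih _ (hn ▸ finrank_faceSpan_lt (C := dualSet C) h0) rfl hF.dual with H | H
      · exact (Simplicial.of_dual hF H).simplicialFace
      · exact (hcon.2 (H.of_quotient hC hξ)).elim

end Induction

section StateSpace

variable {U : Type*} [NormedAddCommGroup U] [NormedSpace ℝ U]
  {E : Type} [NormedAddCommGroup E] [InnerProductSpace ℝ E]

theorem zero_mem_pos (A : ASS U) : (0 : U) ∈ A.pos := by
  obtain ⟨x, hx, -⟩ := A.generating 0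
  simpa using A.smul_mem 0 le_rfl x hx

theorem u_nonneg (A : ASS U) {x : U} (hx : x ∈ A.pos) : 0 ≤ A.u x := by
  by_cases h : x = 0
  · simp [h]
  · exact (A.u_strict x hx h).le

theorem isProperCone_preimage (A : ASS U) (hA : IsClosed A.pos) (T : U ≃L[ℝ] E) :
    IsProperCone (T.symm ⁻¹' A.pos) where
  closed := hA.preimage T.symm.continuous
  zero := by simpa using zero_mem_pos A
  add := fun x hx y hy => by simpa using A.add_mem _ hx _ hy
  smul := fun c hc x hx => by simpa using A.smul_mem c hc _ hx
  pointed := fun x hx hnx => by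
    by_contra h
    have h1 := A.u_strict _ hx (by simpa using h)
    have h2 := u_nonneg A hnx
    simp only [map_neg] at h2
    linarith
  gen := fun f hf => by
    obtain ⟨x, hx, y, hy, hxy⟩ := A.generating (T.symm f)
    have h1 := hf (T x) (by simpa using hx)
    have h2 := hf (T y) (by simpa using hy)
    have h3 : f = T x - T y := by rw [← map_sub, ← hxy, T.apply_symm_apply]
    have h4 : ⟪f, f⟫ = 0 := by
      nth_rewrite 2 [h3]
      rw [inner_sub_right, h1, h2, sub_zero]
    exact inner_self_eq_zero.1 h4

theorem isSimplex_of_simplicial (A : ASS U) (T : U ≃L[ℝ] E)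
    (h : Simplicial (T.symm ⁻¹' A.pos)) : IsSimplex (stateSpace A) := by
  classical
  obtain ⟨ι, _, _, e, l, he, hl, hsum, hdual⟩ := h
  have he0 : ∀ i, T.symm (e i) ≠ 0 := fun i h0 => by
    have h1 : e i = 0 := by simpa using h0
    have h2 := hdual i i
    simp [h1] at h2
  have hu : ∀ i, 0 < A.u (T.symm (e i)) := fun i => A.u_strict _ (he i) (he0 i)
  set v : ι → U := fun i => (A.u (T.symm (e i)))⁻¹ • T.symm (e i) with hv
  have hvpos : ∀ i, v i ∈ A.pos := fun i => A.smul_mem _ (inv_pos.2 (hu i)).le _ (he i)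
  have hvu : ∀ i, A.u (v i) = 1 := fun i => by
    simp only [hv, map_smul, smul_eq_mul]
    exact inv_mul_cancel₀ (hu i).ne'
  have hli : LinearIndependent ℝ v := by
    rw [Fintype.linearIndependent_iff]
    intro g hg i
    have h1 : ⟪l i, T (∑ j, g j • v j)⟫ = 0 := by rw [hg]; simp
    simp only [hv, map_sum, map_smul, T.apply_symm_apply, inner_sum, real_inner_smul_right,
      hdual, mul_ite, mul_one, mul_zero, Finset.sum_ite_eq, Finset.mem_univ, if_true] at h1
    exact (mul_eq_zero.1 h1).resolve_right (inv_pos.2 (hu i)).ne'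
  have hrange : ((Finset.univ.image v : Finset U) : Set U) = Set.range v := by simp
  refine ⟨Finset.univ.image v, ?_, ?_⟩
  · have h1 : AffineIndependent ℝ ((↑) : Set.range v → U) := hli.affineIndependent.range
    rw [← hrange] at h1
    exact h1
  · rw [hrange]
    apply Set.Subset.antisymm
    · rintro x ⟨hx, hx1⟩
      have hx2 : x = ∑ i, (⟪l i, T x⟫ * A.u (T.symm (e i))) • v i := by
        conv_lhs => rw [← T.symm_apply_apply x, hsum (T x), map_sum]
        refine Finset.sum_congr rfl fun i _ => ?_
        simp only [hv, map_smul, smul_smul]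
        rw [mul_assoc, mul_inv_cancel₀ (hu i).ne', mul_one]
      rw [hx2]
      refine (convex_convexHull ℝ _).sum_mem (fun i _ => ?_) ?_
        fun i _ => subset_convexHull ℝ _ (Set.mem_range_self i)
      · exact mul_nonneg (hl i _ (by simpa using hx)) (hu i).le
      · rw [hx2] at hx1
        simpa [hvu] using hx1
    · refine convexHull_min ?_ ?_
      · rintro _ ⟨i, rfl⟩
        exact ⟨hvpos i, hvu i⟩
      · rintro x ⟨hx, hx1⟩ y ⟨hy, hy1⟩ a b ha hb hab
        exact ⟨A.add_mem _ (A.smul_mem a ha x hx) _ (A.smul_mem b hb y hy),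
          by simp [hx1, hy1, hab]⟩

variable [FiniteDimensional ℝ E]

theorem hasSandwich_of_not_isSimplex (A : ASS U) (hA : IsClosed A.pos)
    (hS : ¬ IsSimplex (stateSpace A)) (T : U ≃L[ℝ] E) : HasSandwich (T.symm ⁻¹' A.pos) :=
  (IsProperCone.simplicial_or_hasSandwich _ rfl (isProperCone_preimage A hA T)).resolve_left
    fun h => hS (isSimplex_of_simplicial A T h)

end StateSpace

theorem prodForm_apply {U₁ U₂ : Type*} [NormedAddCommGroup U₁] [NormedSpace ℝ U₁]
    [NormedAddCommGroup U₂] [NormedSpace ℝ U₂] (α : U₁) (β : U₂) (a : Module.Dual ℝ U₁)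
    (b : Module.Dual ℝ U₂) : prodForm α β a b = a α * b β := rfl

/-- The linear form on `U` represented through `T` by the vector `f`. -/
noncomputable def pullback {U : Type*} [NormedAddCommGroup U] [NormedSpace ℝ U]
    {E : Type} [NormedAddCommGroup E] [InnerProductSpace ℝ E] (T : U ≃L[ℝ] E) (f : E) :
    Module.Dual ℝ U :=
  (innerₛₗ ℝ f).comp T.toLinearEquiv.toLinearMap

theorem pullback_apply {U : Type*} [NormedAddCommGroup U] [NormedSpace ℝ U]
    {E : Type} [NormedAddCommGroup E] [InnerProductSpace ℝ E] (T : U ≃L[ℝ] E) (f : E) (v : U) :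
    pullback T f v = ⟪f, T v⟫ := rfl

end PointedCone

open PointedCone in
/-- If neither state space is a simplex, there is an entangled state: a normalized
positive bilinear form on A* × B* that is not a mixture of product states. -/
theorem entangled_state_exists_of_nonclassical
    [FiniteDimensional ℝ V] [FiniteDimensional ℝ W]
    (A : ASS V) (B : ASS W)
    (hAclosed : IsClosed A.pos) (hBclosed : IsClosed B.pos)
    (hA : ¬ IsSimplex (stateSpace A)) (hB : ¬ IsSimplex (stateSpace B)) :
    ∃ ω : Module.Dual ℝ V →ₗ[ℝ] Module.Dual ℝ W →ₗ[ℝ] ℝ,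
      (∀ a ∈ dualCone A, ∀ b ∈ dualCone B, 0 ≤ ω a b) ∧
      ω A.u B.u = 1 ∧
      ¬ ∃ (k : ℕ) (α : Fin k → V) (β : Fin k → W),
          (∀ i, α i ∈ A.pos) ∧ (∀ i, β i ∈ B.pos) ∧
          ω = ∑ i, prodForm (α i) (β i) := by
  have hTA := hasSandwich_of_not_isSimplex A hAclosed hA toEuclidean
  have hTB := hasSandwich_of_not_isSimplex B hBclosed hB toEuclidean
  obtain ⟨x, f, y, g, κ, hx, -, hy, -, hxs, hys, hx2, hx3, hy2, hκ, hneg⟩ :=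
    exists_form_and_witness hTA hTB
  set S := (toEuclidean : V ≃L[ℝ] _)
  set T := (toEuclidean : W ≃L[ℝ] _)
  set x' : Fin 4 → V := fun i => S.symm (x i) with hx'
  set y' : Fin 4 → W := fun i => T.symm (y i) with hy'
  have hxpos : ∀ i, x' i ∈ A.pos := hx
  have hypos : ∀ i, y' i ∈ B.pos := hy
  have hxs' : x' 0 + x' 2 = x' 1 + x' 3 := by simp only [hx', ← map_add, hxs]
  have hys' : y' 0 + y' 2 = y' 1 + y' 3 := by simp only [hy', ← map_add, hys]
  have hx2' : x' 2 ≠ 0 := by simpa [hx'] using hx2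
  have hx3' : x' 3 ≠ 0 := by simpa [hx'] using hx3
  have hy2' : y' 2 ≠ 0 := by simpa [hy'] using hy2
  set ω₀ := prodForm (x' 2) (y' 2) + prodForm (x' 0) (y' 1) + prodForm (x' 1) (y' 0)
    - prodForm (x' 1) (y' 1) with hω₀
  have hω₀ab : ∀ a b, ω₀ a b = pairing (fun i => a (x' i)) (fun i => b (y' i)) := fun a b => rfl
  have hlower : ∀ a ∈ dualCone A, ∀ b ∈ dualCone B,
      min (a (x' 2)) (a (x' 3)) * b (y' 2) ≤ ω₀ a b := by
    intro a ha b hb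
    refine min_mul_le_bilinear (ha _ (hxpos 0)) (ha _ (hxpos 1)) (hb _ (hypos 0))
      (hb _ (hypos 1)) (hb _ (hypos 2)) (hb _ (hypos 3)) ?_ ?_
    · simpa only [map_add] using congrArg a hxs'
    · simpa only [map_add] using congrArg b hys'
  have hpos : 0 < ω₀ A.u B.u :=
    (mul_pos (lt_min (A.u_strict _ (hxpos 2) hx2') (A.u_strict _ (hxpos 3) hx3'))
      (B.u_strict _ (hypos 2) hy2')).trans_le
      (hlower _ (fun _ h => u_nonneg A h) _ (fun _ h => u_nonneg B h))
  refine ⟨(ω₀ A.u B.u)⁻¹ • ω₀, fun a ha b hb => ?_, ?_, ?_⟩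
  · exact mul_nonneg (inv_pos.2 hpos).le ((mul_nonneg
      (le_min (ha _ (hxpos 2)) (ha _ (hxpos 3))) (hb _ (hypos 2))).trans (hlower a ha b hb))
  · exact inv_mul_cancel₀ hpos.ne'
  · rintro ⟨k, α, β, hα, hβ, hω⟩
    have hval : ∀ a b, (ω₀ A.u B.u)⁻¹ * ω₀ a b = ∑ i, a (α i) * b (β i) := fun a b => by
      have := congrArg (fun ω => ω a b) hω
      simpa [prodForm_apply, LinearMap.sum_apply] using this
    set F := fun i => pullback S (f i) with hF
    set G := fun i => pullback T (g i) with hG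
    have hP := hneg (fun i j => ω₀ (F i) (G j)) fun i j => by
      rw [hω₀ab]
      simp [hF, hG, pullback_apply, hx', hy']
    have hterm : 0 ≤ ∑ i, (F 0 (α i) * G 2 (β i) - F 0 (α i) * G 1 (β i) + F 3 (α i) * G 0 (β i)
        + F 1 (α i) * G 1 (β i) - κ * (F 0 (α i) * G 0 (β i))) :=
      Finset.sum_nonneg fun i _ => sub_nonneg.2 <|
        hκ (S (α i)) (by simpa using hα i) (T (β i)) (by simpa using hβ i)
    rw [Finset.sum_sub_distrib, Finset.sum_add_distrib, Finset.sum_add_distrib,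
      Finset.sum_sub_distrib, ← Finset.mul_sum, ← hval, ← hval, ← hval, ← hval, ← hval] at hterm
    have hlt := mul_neg_of_pos_of_neg (inv_pos.2 hpos) hP
    linarith
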